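/- Suppose P is a proper real-rational n×n transfer matrix that is negative imaginary (NI) without poles at the origin and C is strictly negative imaginary (SNI). Then the following are equivalent: (a) [τP, C] is stable for all τ ∈ [0,1]; (b) for all τ ∈ [0,1], det(τP(∞)C(∞) − I) ≠ 0, det(τP(0)C(∞) − I) ≠ 0 and det(τP(0)C(0) − I) ≠ 0; (c) for all τ ∈ [0,1], det(τP(∞)C(∞) − I) ≠ 0, det(τP(∞)C(0) − I) ≠ 0 and det(τP(0)C(0) − I) ≠ 0. -/

import Mathlib

open Matrix Polynomial Filter Topology
open scoped ComplexOrder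

noncomputable section

namespace NIControl

/-- Evaluate a real-rational function at a complex point (junk value at poles). -/
def evalC (f : RatFunc ℝ) (s : ℂ) : ℂ :=
  f.eval (algebraMap ℝ ℂ) s

/-- `s` is a pole of the real-rational function `f`
(the reduced denominator vanishes at `s`). -/
def IsPoleAt (f : RatFunc ℝ) (s : ℂ) : Prop :=
  f.denom.eval₂ (algebraMap ℝ ℂ) s = 0

variable {n : ℕ}

/-- Pointwise evaluation of a real-rational transfer matrix at a complex point. -/
def evalM (G : Matrix (Fin n) (Fin n) (RatFunc ℝ)) (s : ℂ) : Matrix (Fin n) (Fin n) ℂ :=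
  Matrix.of fun i j => evalC (G i j) s

/-- Pointwise evaluation of a real-rational transfer matrix at a real point. -/
def evalR (G : Matrix (Fin n) (Fin n) (RatFunc ℝ)) (x : ℝ) : Matrix (Fin n) (Fin n) ℝ :=
  Matrix.of fun i j => (G i j).eval (RingHom.id ℝ) x

/-- Value at `s = ∞` of a proper real-rational function. -/
def atInfinity (f : RatFunc ℝ) : ℝ :=
  if f.num.degree = f.denom.degree then f.num.leadingCoeff / f.denom.leadingCoeff else 0

/-- The instantaneous gain `G(∞)` of a proper real-rational transfer matrix. -/
def evalInf (G : Matrix (Fin n) (Fin n) (RatFunc ℝ)) : Matrix (Fin n) (Fin n) ℝ :=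
  Matrix.of fun i j => atInfinity (G i j)

/-- The matrix `G` has a pole at `s`. -/
def HasPole (G : Matrix (Fin n) (Fin n) (RatFunc ℝ)) (s : ℂ) : Prop :=
  ∃ i j, IsPoleAt (G i j) s

/-- All entries of `G` are proper rational functions. -/
def Proper (G : Matrix (Fin n) (Fin n) (RatFunc ℝ)) : Prop :=
  ∀ i j, (G i j).num.degree ≤ (G i j).denom.degree

/-- All entries of `G` are strictly proper rational functions. -/
def StrictlyProper (G : Matrix (Fin n) (Fin n) (RatFunc ℝ)) : Prop :=
  ∀ i j, (G i j).num.degree < (G i j).denom.degree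

/-- The pole of `G` at the origin (if any) is at most simple. -/
def NoDoubleOriginPole (G : Matrix (Fin n) (Fin n) (RatFunc ℝ)) : Prop :=
  ∀ i j, (G i j).denom.rootMultiplicity 0 ≤ 1

/-- Membership in `RH∞`: proper and no poles in the closed right-half complex plane. -/
def MemRHinf {m : Type*} [Fintype m] (G : Matrix m m (RatFunc ℝ)) : Prop :=
  (∀ i j, (G i j).num.degree ≤ (G i j).denom.degree) ∧
  ∀ s : ℂ, 0 ≤ s.re → ∀ i j, ¬ IsPoleAt (G i j) s

/-- The point `jω` on the imaginary axis. -/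
def jw (ω : ℝ) : ℂ := Complex.I * (ω : ℂ)

/-- The negative-imaginary frequency kernel `j (M − M*)`. -/
def niKer (M : Matrix (Fin n) (Fin n) ℂ) : Matrix (Fin n) (Fin n) ℂ :=
  Complex.I • (M - Mᴴ)

/-- Negative imaginary (NI) real-rational transfer matrix. -/
def IsNI (G : Matrix (Fin n) (Fin n) (RatFunc ℝ)) : Prop :=
  Proper G ∧
  (∀ s : ℂ, 0 < s.re → ¬ HasPole G s) ∧
  (∀ ω : ℝ, 0 < ω → ¬ HasPole G (jw ω) → (niKer (evalM G (jw ω))).PosSemidef) ∧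
  (∀ ω : ℝ, 0 < ω → HasPole G (jw ω) →
    ∃ R : Matrix (Fin n) (Fin n) ℂ, R.PosSemidef ∧
      Tendsto (fun s : ℂ => (s - jw ω) • Complex.I • evalM G s) (𝓝[≠] jw ω) (𝓝 R)) ∧
  (HasPole G 0 →
    (∀ k : ℕ, 3 ≤ k → Tendsto (fun s : ℂ => s ^ k • evalM G s) (𝓝[≠] 0) (𝓝 0)) ∧
    ∃ R : Matrix (Fin n) (Fin n) ℂ, R.PosSemidef ∧
      Tendsto (fun s : ℂ => s ^ 2 • evalM G s) (𝓝[≠] 0) (𝓝 R))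

/-- Strictly negative imaginary (SNI) real-rational transfer matrix. -/
def IsSNI (G : Matrix (Fin n) (Fin n) (RatFunc ℝ)) : Prop :=
  MemRHinf G ∧ ∀ ω : ℝ, 0 < ω → (niKer (evalM G (jw ω))).PosDef

/-- Positive real (passive) real-rational transfer matrix. -/
def IsPositiveReal (G : Matrix (Fin n) (Fin n) (RatFunc ℝ)) : Prop :=
  MemRHinf G ∧ ∀ ω : ℝ, 0 ≤ ω → (evalM G (jw ω) + (evalM G (jw ω))ᴴ).PosSemidef

/-- Output strictly passive real-rational transfer matrix. -/
def IsOSP (G : Matrix (Fin n) (Fin n) (RatFunc ℝ)) : Prop :=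
  MemRHinf G ∧ ∃ ε : ℝ, 0 < ε ∧ ∀ ω : ℝ, 0 ≤ ω →
    (evalM G (jw ω) + (evalM G (jw ω))ᴴ -
      (ε : ℂ) • ((evalM G (jw ω))ᴴ * evalM G (jw ω))).PosSemidef

/-- Stability of the positive feedback interconnection `[P, C]`:
`[I; C] (I − P C)⁻¹ [I, P] ∈ RH∞`. -/
def FeedbackStable (P C : Matrix (Fin n) (Fin n) (RatFunc ℝ)) : Prop :=
  ((1 : Matrix (Fin n) (Fin n) (RatFunc ℝ)) - P * C).det ≠ 0 ∧
  MemRHinf (Matrix.fromBlocks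
    (1 - P * C)⁻¹ ((1 - P * C)⁻¹ * P)
    (C * (1 - P * C)⁻¹) (C * (1 - P * C)⁻¹ * P))

/-- All eigenvalues of the complex matrix `M` are real and less than `c`. -/
def eigsRealAndLT (M : Matrix (Fin n) (Fin n) ℂ) (c : ℝ) : Prop :=
  ∀ μ ∈ spectrum ℂ M, μ.im = 0 ∧ μ.re < c

/-- The (real) eigenvalues of the real matrix `M` are all real and its largest
eigenvalue is less than `c`. -/
def maxEigLT (M : Matrix (Fin n) (Fin n) ℝ) (c : ℝ) : Prop :=
  eigsRealAndLT (M.map (Complex.ofReal)) c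

/-- Loewner order `A ≤ B` on real matrices. -/
def LoewnerLE (A B : Matrix (Fin n) (Fin n) ℝ) : Prop := (B - A).PosSemidef

/-- Strict Loewner order `A < B` on real matrices. -/
def LoewnerLT (A B : Matrix (Fin n) (Fin n) ℝ) : Prop := (B - A).PosDef

/-! ### Evaluation of rational functions -/

lemma evalC_eq (f : RatFunc ℝ) (s : ℂ) :
    evalC f s = (f.num.map (algebraMap ℝ ℂ)).eval s / (f.denom.map (algebraMap ℝ ℂ)).eval s := by
  simp [evalC, RatFunc.eval, Polynomial.eval_map]

lemma isPoleAt_iff (f : RatFunc ℝ) (s : ℂ) :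
    IsPoleAt f s ↔ (f.denom.map (algebraMap ℝ ℂ)).eval s = 0 := by
  simp [IsPoleAt, Polynomial.eval_map]

lemma denom_map_ne_zero (f : RatFunc ℝ) : f.denom.map (algebraMap ℝ ℂ) ≠ 0 :=
  (Polynomial.map_ne_zero_iff (algebraMap ℝ ℂ).injective).2 f.denom_ne_zero

lemma evalC_differentiableAt {f : RatFunc ℝ} {s : ℂ} (h : ¬ IsPoleAt f s) :
    DifferentiableAt ℂ (evalC f) s := by
  have : evalC f = fun s => (f.num.map (algebraMap ℝ ℂ)).eval s /
      (f.denom.map (algebraMap ℝ ℂ)).eval s := funext (evalC_eq f)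
  rw [this]
  rw [isPoleAt_iff] at h
  exact (Polynomial.differentiableAt _).div (Polynomial.differentiableAt _) h

lemma eventually_cofinite_not_pole (f : RatFunc ℝ) : ∀ᶠ s in cofinite, ¬ IsPoleAt f s := by
  filter_upwards [Polynomial.eventually_cofinite_not_isRoot (denom_map_ne_zero f)] with s hs
  rwa [isPoleAt_iff]

lemma punctured_le_cofinite (s : ℂ) : 𝓝[≠] s ≤ cofinite := by
  intro S hS
  rw [mem_cofinite] at hS
  have h1 : (Sᶜ \ {s})ᶜ ∈ 𝓝 s := (hS.subset Set.sdiff_subset).isClosed.isOpen_compl.mem_nhds (by simp)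
  filter_upwards [mem_nhdsWithin_of_mem_nhds h1, self_mem_nhdsWithin] with z hz hz'
  by_contra h
  exact hz ⟨h, hz'⟩

lemma evalC_tendsto_inf {f : RatFunc ℝ} (h : f.num.degree ≤ f.denom.degree) :
    Tendsto (evalC f) (Bornology.cobounded ℂ) (𝓝 (atInfinity f : ℂ)) := by
  set N := f.num.map (algebraMap ℝ ℂ) with hN
  set D := f.denom.map (algebraMap ℝ ℂ) with hD
  have hD0 : D ≠ 0 := denom_map_ne_zero f
  have hdeg : (N - Polynomial.C (atInfinity f : ℂ) * D).degree < D.degree := by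
    by_cases h' : f.num.degree = f.denom.degree
    · have hNd : N.degree = D.degree := by simp [hN, hD, h']
      have hf : f.denom.leadingCoeff ≠ 0 := by simp [f.denom_ne_zero]
      have hn0 : f.num ≠ 0 := by
        intro h0
        rw [h0, degree_zero] at h'
        exact f.denom_ne_zero (degree_eq_bot.1 h'.symm)
      have hc : atInfinity f ≠ 0 := by
        simp only [atInfinity, h', if_true]
        exact div_ne_zero (by simpa using hn0) hf
      have hc' : (atInfinity f : ℂ) ≠ 0 := by exact_mod_cast hc
      rw [← hNd]
      refine degree_sub_lt_left ?_ ?_ ?_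
      · rw [degree_C_mul hc', hNd]
      · intro h0
        rw [h0, degree_zero] at hNd
        exact hD0 (degree_eq_bot.1 hNd.symm)
      · rw [leadingCoeff_mul, leadingCoeff_C, hN, hD, leadingCoeff_map, leadingCoeff_map]
        simp only [atInfinity, h', if_true]
        simp only [Complex.coe_algebraMap]
        push_cast
        have : (f.denom.leadingCoeff : ℂ) ≠ 0 := by exact_mod_cast hf
        field_simp
    · simp only [atInfinity, h', if_false]
      have := lt_of_le_of_ne h h'
      simpa [hN, hD] using this
  have h1 := (Polynomial.isLittleO_cobounded_of_degree_lt hdeg).tendsto_div_nhds_zero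
  have h2 : ∀ᶠ s in Bornology.cobounded ℂ, D.eval s ≠ 0 :=
    Bornology.le_cofinite _ (Polynomial.eventually_cofinite_not_isRoot hD0)
  have h3 := h1.add_const (atInfinity f : ℂ)
  rw [zero_add] at h3
  refine h3.congr' ?_
  filter_upwards [h2] with s hs
  rw [evalC_eq, ← hN, ← hD]
  simp only [eval_sub, eval_mul, eval_C]
  field_simp
  ring

lemma evalC_conj (f : RatFunc ℝ) (s : ℂ) : evalC f (star s) = star (evalC f s) := by
  have key : ∀ p : ℝ[X], (p.map (algebraMap ℝ ℂ)).eval (star s)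
      = star ((p.map (algebraMap ℝ ℂ)).eval s) := by
    intro p
    rw [eval_map, eval_map, eval₂_eq_sum_range, eval₂_eq_sum_range, star_sum]
    refine Finset.sum_congr rfl fun i _ => ?_
    simp
  rw [evalC_eq, evalC_eq, key, key, star_div₀]

lemma isPoleAt_conj (f : RatFunc ℝ) (s : ℂ) : IsPoleAt f (star s) ↔ IsPoleAt f s := by
  have key : ∀ p : ℝ[X], (p.map (algebraMap ℝ ℂ)).eval (star s)
      = star ((p.map (algebraMap ℝ ℂ)).eval s) := by
    intro p
    rw [eval_map, eval_map, eval₂_eq_sum_range, eval₂_eq_sum_range, star_sum]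
    refine Finset.sum_congr rfl fun i _ => ?_
    simp
  rw [isPoleAt_iff, isPoleAt_iff, key, star_eq_zero]

lemma evalC_ofReal (f : RatFunc ℝ) (x : ℝ) : evalC f x = ((f.eval (RingHom.id ℝ) x : ℝ) : ℂ) := by
  have key : ∀ p : ℝ[X], p.eval₂ (algebraMap ℝ ℂ) (x : ℂ) = ((p.eval₂ (RingHom.id ℝ) x : ℝ) : ℂ) := by
    intro p
    rw [eval₂_eq_sum_range, eval₂_eq_sum_range]
    simp
  simp [evalC, RatFunc.eval, key]

/-- bounded along a filter approaching `s` implies no pole -/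
lemma not_pole_of_bounded {f : RatFunc ℝ} {s : ℂ} {l : Filter ℂ} [l.NeBot] (hl : l ≤ 𝓝 s)
    {K : ℝ} (h : ∀ᶠ z in l, ¬ IsPoleAt f z ∧ ‖evalC f z‖ ≤ K) : ¬ IsPoleAt f s := by
  intro hp
  rw [isPoleAt_iff] at hp
  set N := f.num.map (algebraMap ℝ ℂ) with hN
  set D := f.denom.map (algebraMap ℝ ℂ) with hD
  have hDt : Tendsto (fun z => D.eval z) l (𝓝 0) := by
    have := (D.continuous.tendsto s).mono_left hl
    rwa [hp] at this
  have hNt : Tendsto (fun z => N.eval z) l (𝓝 (N.eval s)) := (N.continuous.tendsto s).mono_left hl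
  have hN0 : Tendsto (fun z => N.eval z) l (𝓝 0) := by
    have h2 : Tendsto (fun z => K * ‖D.eval z‖) l (𝓝 0) := by
      simpa using (hDt.norm.const_mul K)
    refine squeeze_zero_norm' ?_ h2
    filter_upwards [h] with z hz
    have h3 := hz.1
    rw [isPoleAt_iff, ← hD] at h3
    have h4 : N.eval z = evalC f z * D.eval z := by
      rw [evalC_eq, ← hN, ← hD]; field_simp
    rw [h4, norm_mul]
    exact mul_le_mul_of_nonneg_right hz.2 (norm_nonneg _)
  have hNs : N.eval s = 0 := tendsto_nhds_unique hNt hN0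
  have hco : IsCoprime N D := (RatFunc.isCoprime_num_denom f).map (Polynomial.mapRingHom (algebraMap ℝ ℂ))
  obtain ⟨a, b, hab⟩ := hco
  have := congrArg (Polynomial.eval s) hab
  simp [hNs, hp] at this

lemma proper_of_bounded {f : RatFunc ℝ} {K : ℝ}
    (h : ∀ᶠ x : ℝ in atTop, ‖evalC f (x : ℂ)‖ ≤ K) : f.num.degree ≤ f.denom.degree := by
  by_contra hlt
  rw [not_le] at hlt
  have h1 := Polynomial.abs_div_tendsto_atTop_atTop_of_degree_gt f.num f.denom hlt f.denom_ne_zero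
  obtain ⟨x, hx1, hx2⟩ := (h.and (h1.eventually_gt_atTop K)).exists
  rw [evalC_ofReal, Complex.norm_real, Real.norm_eq_abs] at hx1
  simp only [RatFunc.eval] at hx1
  simp only [Polynomial.eval] at hx2
  linarith

/-- rational functions regular at `s` -/
def reg (s : ℂ) : Subring (RatFunc ℝ) where
  carrier := {f | ¬ IsPoleAt f s}
  mul_mem' := by
    intro a b ha hb hab
    have h := Polynomial.eval₂_dvd (algebraMap ℝ ℂ) s (RatFunc.denom_mul_dvd a b)
    simp only [IsPoleAt] at hab ha hb
    rw [hab, zero_dvd_iff, eval₂_mul] at h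
    exact (mul_ne_zero ha hb) h
  one_mem' := by simp [IsPoleAt]
  add_mem' := by
    intro a b ha hb hab
    have h := Polynomial.eval₂_dvd (algebraMap ℝ ℂ) s (RatFunc.denom_add_dvd a b)
    simp only [IsPoleAt] at hab ha hb
    rw [hab, zero_dvd_iff, eval₂_mul] at h
    exact (mul_ne_zero ha hb) h
  zero_mem' := by simp [IsPoleAt]
  neg_mem' := by
    intro a ha hab
    have h := Polynomial.eval₂_dvd (algebraMap ℝ ℂ) s (RatFunc.denom_mul_dvd (RatFunc.C (-1)) a)
    simp only [IsPoleAt] at hab ha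
    have h' : RatFunc.C (-1) * a = -a := by simp
    rw [h', hab, zero_dvd_iff, eval₂_mul] at h
    rw [RatFunc.denom_C, eval₂_one, one_mul] at h
    exact ha h

lemma mem_reg {s : ℂ} {f : RatFunc ℝ} : f ∈ reg s ↔ ¬ IsPoleAt f s := Iff.rfl

/-- evaluation as a ring homomorphism -/
def evh (s : ℂ) : reg s →+* ℂ where
  toFun f := evalC f.1 s
  map_one' := by simp [evalC]
  map_mul' := by
    intro a b
    exact RatFunc.eval_mul _ _ a.2 b.2
  map_zero' := by simp [evalC]
  map_add' := by
    intro a b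
    exact RatFunc.eval_add _ _ a.2 b.2

/-- pointwise evaluation for matrices with arbitrary index type -/
def ev {m : Type*} (s : ℂ) (A : Matrix m m (RatFunc ℝ)) : Matrix m m ℂ := A.map (fun f => evalC f s)

lemma evalM_eq_ev {n : ℕ} (A : Matrix (Fin n) (Fin n) (RatFunc ℝ)) (s : ℂ) : evalM A s = ev s A := rfl

/-- all entries regular at `s` -/
def RegM {m : Type*} (s : ℂ) (A : Matrix m m (RatFunc ℝ)) : Prop := ∀ i j, A i j ∈ reg s

section evalg
variable {m : Type*} [Fintype m] [DecidableEq m] {s : ℂ} {A B : Matrix m m (RatFunc ℝ)}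

/-- lift to the regular ring -/
def liftM (hA : RegM s A) : Matrix m m (reg s) := Matrix.of fun i j => ⟨A i j, hA i j⟩

lemma liftM_map (hA : RegM s A) : (liftM hA).map (reg s).subtype = A := rfl

lemma liftM_ev (hA : RegM s A) : (liftM hA).map (evh s) = ev s A := rfl

lemma RegM.mul (hA : RegM s A) (hB : RegM s B) : RegM s (A * B) := by
  intro i j
  rw [Matrix.mul_apply]
  exact Subring.sum_mem _ fun k _ => Subring.mul_mem _ (hA _ _) (hB _ _)

lemma ev_mul (hA : RegM s A) (hB : RegM s B) : ev s (A * B) = ev s A * ev s B := by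
  have h : liftM (hA.mul hB) = liftM hA * liftM hB := by
    ext i j
    simp [liftM, Matrix.mul_apply]
  rw [← liftM_ev (hA.mul hB), h, Matrix.map_mul, liftM_ev, liftM_ev]

lemma RegM.one : RegM s (1 : Matrix m m (RatFunc ℝ)) := by
  intro i j
  by_cases h : i = j
  · subst h; simp
  · simp [h]

lemma ev_one : ev s (1 : Matrix m m (RatFunc ℝ)) = 1 := by
  ext i j
  by_cases h : i = j
  · subst h; simp [ev, evalC]
  · simp [ev, h, evalC]

lemma RegM.sub (hA : RegM s A) (hB : RegM s B) : RegM s (A - B) :=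
  fun i j => Subring.sub_mem _ (hA _ _) (hB _ _)

lemma ev_sub (hA : RegM s A) (hB : RegM s B) : ev s (A - B) = ev s A - ev s B := by
  ext i j
  exact (evh s).map_sub ⟨A i j, hA i j⟩ ⟨B i j, hB i j⟩

lemma RegM.neg (hA : RegM s A) : RegM s (-A) :=
  fun i j => Subring.neg_mem _ (hA _ _)

lemma ev_neg (hA : RegM s A) : ev s (-A) = - ev s A := by
  ext i j
  exact (evh s).map_neg ⟨A i j, hA i j⟩

lemma C_mem_reg (τ : ℝ) : RatFunc.C τ ∈ reg s := by
  simp [mem_reg, IsPoleAt]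

lemma RegM.smul (τ : ℝ) (hA : RegM s A) : RegM s (τ • A) := by
  intro i j
  rw [Matrix.smul_apply, RatFunc.smul_eq_C_mul]
  exact Subring.mul_mem _ (C_mem_reg τ) (hA _ _)

lemma ev_smul (τ : ℝ) (hA : RegM s A) : ev s (τ • A) = (τ : ℂ) • ev s A := by
  ext i j
  simp only [ev, Matrix.map_apply, Matrix.smul_apply, RatFunc.smul_eq_C_mul]
  have := (evh s).map_mul ⟨RatFunc.C τ, C_mem_reg τ⟩ ⟨A i j, hA i j⟩
  refine this.trans ?_
  simp [evh, evalC]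

lemma ev_det (hA : RegM s A) : evalC A.det s = (ev s A).det := by
  rw [← liftM_ev hA, ← RingHom.mapMatrix_apply, ← RingHom.map_det]
  have : A.det = ((liftM hA).det : RatFunc ℝ) := by
    have h := (reg s).subtype.map_det (liftM hA)
    rw [RingHom.mapMatrix_apply, liftM_map] at h
    exact h.symm
  rw [this]
  rfl

lemma eventually_cofinite_regM (A : Matrix m m (RatFunc ℝ)) : ∀ᶠ s in cofinite, RegM s A := by
  simp only [RegM, mem_reg]
  rw [eventually_all]
  intro i
  rw [eventually_all]
  intro j
  exact eventually_cofinite_not_pole _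

end evalg

lemma regM_iff {n : ℕ} {A : Matrix (Fin n) (Fin n) (RatFunc ℝ)} {s : ℂ} :
    RegM s A ↔ ¬ HasPole A s := by
  simp [RegM, HasPole, mem_reg]

section analytic
open scoped Matrix.Norms.Operator

/-- lower bound for a matrix in the sup norm -/
def LB {m : Type*} [Fintype m] (κ : ℝ) (A : Matrix m m ℂ) : Prop :=
  ∀ z : m → ℂ, κ * ‖z‖ ≤ ‖A *ᵥ z‖

/-- the feedback matrix -/
def Lb {n : ℕ} (Q C : Matrix (Fin n) (Fin n) ℂ) : Matrix (Fin n ⊕ Fin n) (Fin n ⊕ Fin n) ℂ :=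
  Matrix.fromBlocks 1 (-Q) (-C) 1

lemma LB.isUnit {m : Type*} [Fintype m] [DecidableEq m] {κ : ℝ} {A : Matrix m m ℂ} (hκ : 0 < κ)
    (h : LB κ A) : IsUnit A := by
  rw [← Matrix.mulVec_injective_iff_isUnit]
  intro a b hab
  have h1 := h (a - b)
  have h2 : A *ᵥ (a - b) = 0 := by rw [Matrix.mulVec_sub]; exact sub_eq_zero.2 hab
  rw [h2, norm_zero] at h1
  have h3 : ‖a - b‖ ≤ 0 := by
    by_contra hh
    push Not at hh
    nlinarith
  exact sub_eq_zero.1 (norm_le_zero_iff.1 h3)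

lemma LB.norm_inv_le {m : Type*} [Fintype m] [DecidableEq m] {κ : ℝ} {A : Matrix m m ℂ}
    (hκ : 0 < κ) (h : LB κ A) : ‖A⁻¹‖ ≤ κ⁻¹ := by
  rw [Matrix.linfty_opNorm_eq_opNorm]
  refine ContinuousLinearMap.opNorm_le_bound _ (by positivity) fun v => ?_
  have h1 := h (A⁻¹ *ᵥ v)
  have hd := (Matrix.isUnit_iff_isUnit_det A).1 (h.isUnit hκ)
  rw [Matrix.mulVec_mulVec, Matrix.mul_nonsing_inv _ hd, Matrix.one_mulVec] at h1
  change ‖A⁻¹ *ᵥ v‖ ≤ _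
  rw [inv_mul_eq_div, le_div_iff₀ hκ]
  linarith

lemma LB_of_norm_inv_le {m : Type*} [Fintype m] [DecidableEq m] {κ : ℝ} {A : Matrix m m ℂ}
    (hκ : 0 < κ) (hu : IsUnit A) (h : ‖A⁻¹‖ ≤ κ⁻¹) : LB κ A := by
  intro z
  have hd := (Matrix.isUnit_iff_isUnit_det A).1 hu
  have h1 := Matrix.linfty_opNorm_mulVec A⁻¹ (A *ᵥ z)
  rw [Matrix.mulVec_mulVec, Matrix.nonsing_inv_mul _ hd, Matrix.one_mulVec] at h1
  have h2 : ‖z‖ ≤ κ⁻¹ * ‖A *ᵥ z‖ := h1.trans (by gcongr)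
  rw [inv_mul_eq_div, le_div_iff₀ hκ] at h2
  linarith

lemma pl_step {m : Type*} [Fintype m] [DecidableEq m] {A : ℂ → Matrix m m ℂ}
    (hA : DiffContOnCl ℂ A {z | 0 < z.re}) {κ κ' : ℝ} (hκ : 0 < κ) (hκ' : 0 < κ')
    (h' : ∀ s : ℂ, 0 ≤ s.re → LB κ' (A s)) (h : ∀ ω : ℝ, LB κ (A (jw ω))) :
    ∀ s : ℂ, 0 ≤ s.re → LB κ (A s) := by
  intro s hs
  refine LB_of_norm_inv_le hκ ((h' s hs).isUnit hκ') ?_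
  have hcl : closure {z : ℂ | 0 < z.re} = {z | 0 ≤ z.re} := Complex.closure_setOfPred_lt_re 0
  have hd : DiffContOnCl ℂ (fun s => (A s)⁻¹) {z | 0 < z.re} := by
    constructor
    · intro z hz
      have hu := (h' z (le_of_lt hz)).isUnit hκ'
      have hz' : DifferentiableWithinAt ℂ A {z | 0 < z.re} z := hA.1 z hz
      obtain ⟨u, hu⟩ := hu
      have h2 : DifferentiableAt ℂ (Ring.inverse (M₀ := Matrix m m ℂ)) (A z) := by
        rw [← hu]; exact differentiableAt_inverse u.isUnit
      have := h2.comp_differentiableWithinAt z hz'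
      simpa only [Function.comp_def, ← Matrix.nonsing_inv_eq_ringInverse] using this
    · rw [hcl]
      intro z hz
      have hu := (h' z hz).isUnit hκ'
      have hz' : ContinuousWithinAt A {z | 0 ≤ z.re} z := by
        have := hA.2; rw [hcl] at this; exact this z hz
      obtain ⟨u, hu⟩ := hu
      have h2 : ContinuousAt (Ring.inverse (M₀ := Matrix m m ℂ)) (A z) := by
        rw [← hu]; exact NormedRing.inverse_continuousAt u
      have := h2.comp_continuousWithinAt hz'
      have e : (fun s => (A s)⁻¹) = (Ring.inverse (M₀ := Matrix m m ℂ)) ∘ A :=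
        funext fun s => Matrix.nonsing_inv_eq_ringInverse _
      rw [e]
      exact this
  refine PhragmenLindelof.right_half_plane_of_bounded_on_real hd ⟨1, by norm_num, 0, ?_⟩ ?_ ?_ hs
  · refine Asymptotics.IsBigO.of_bound (κ'⁻¹) ?_
    rw [eventually_inf_principal]
    refine Eventually.of_forall fun z hz => ?_
    simpa using (h' z (le_of_lt hz)).norm_inv_le hκ'
  · refine ⟨κ'⁻¹, ?_⟩
    rw [eventually_map]
    filter_upwards [eventually_ge_atTop 0] with x hx
    exact (h' x (by simpa using hx)).norm_inv_le hκ'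
  · intro x
    have := (h x).norm_inv_le hκ
    rwa [jw, mul_comm] at this

/-- upper right block as a linear map -/
def L1 (n : ℕ) : Matrix (Fin n) (Fin n) ℂ →ₗ[ℂ] Matrix (Fin n ⊕ Fin n) (Fin n ⊕ Fin n) ℂ where
  toFun Q := Matrix.fromBlocks 0 (-Q) 0 0
  map_add' a b := by simp [Matrix.fromBlocks_add, add_comm]
  map_smul' a b := by simp [Matrix.fromBlocks_smul]

/-- lower left block as a linear map -/
def L2 (n : ℕ) : Matrix (Fin n) (Fin n) ℂ →ₗ[ℂ] Matrix (Fin n ⊕ Fin n) (Fin n ⊕ Fin n) ℂ where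
  toFun Q := Matrix.fromBlocks 0 0 (-Q) 0
  map_add' a b := by simp [Matrix.fromBlocks_add, add_comm]
  map_smul' a b := by simp [Matrix.fromBlocks_smul]

lemma L1_le (n : ℕ) (Q : Matrix (Fin n) (Fin n) ℂ) : ‖L1 n Q‖ ≤ 1 * ‖Q‖ := by
  rw [Matrix.linfty_opNorm_eq_opNorm]
  refine ContinuousLinearMap.opNorm_le_bound _ (by positivity) fun v => ?_
  change ‖Matrix.fromBlocks 0 (-Q) 0 0 *ᵥ v‖ ≤ _
  rw [Matrix.fromBlocks_mulVec, pi_norm_le_iff_of_nonneg (by positivity)]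
  have h1 := Matrix.linfty_opNorm_mulVec Q (v ∘ Sum.inr)
  have h2 : ‖v ∘ Sum.inr‖ ≤ ‖v‖ :=
    (pi_norm_le_iff_of_nonneg (norm_nonneg _)).2 fun i => norm_le_pi_norm v (Sum.inr i)
  rintro (i | i)
  · have h3 := norm_le_pi_norm (Q *ᵥ (v ∘ Sum.inr)) i
    have h4 := mul_le_mul_of_nonneg_left h2 (norm_nonneg Q)
    simp only [Matrix.zero_mulVec, Matrix.neg_mulVec, zero_add, Sum.elim_inl, Pi.neg_apply, norm_neg]
    linarith
  · simp only [Matrix.zero_mulVec, add_zero, Sum.elim_inr, Pi.zero_apply, norm_zero]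
    positivity

/-- continuous version -/
def L1c (n : ℕ) : Matrix (Fin n) (Fin n) ℂ →L[ℂ] Matrix (Fin n ⊕ Fin n) (Fin n ⊕ Fin n) ℂ :=
  (L1 n).mkContinuous 1 fun Q => L1_le n Q

lemma L2_le (n : ℕ) (Q : Matrix (Fin n) (Fin n) ℂ) : ‖L2 n Q‖ ≤ 1 * ‖Q‖ := by
  rw [Matrix.linfty_opNorm_eq_opNorm]
  refine ContinuousLinearMap.opNorm_le_bound _ (by positivity) fun v => ?_
  change ‖Matrix.fromBlocks 0 0 (-Q) 0 *ᵥ v‖ ≤ _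
  rw [Matrix.fromBlocks_mulVec, pi_norm_le_iff_of_nonneg (by positivity)]
  have h1 := Matrix.linfty_opNorm_mulVec Q (v ∘ Sum.inl)
  have h2 : ‖v ∘ Sum.inl‖ ≤ ‖v‖ :=
    (pi_norm_le_iff_of_nonneg (norm_nonneg _)).2 fun i => norm_le_pi_norm v (Sum.inl i)
  rintro (i | i)
  · simp only [Matrix.zero_mulVec, add_zero, Sum.elim_inl, Pi.zero_apply, norm_zero]
    positivity
  · have h3 := norm_le_pi_norm (Q *ᵥ (v ∘ Sum.inl)) i
    have h4 := mul_le_mul_of_nonneg_left h2 (norm_nonneg Q)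
    simp only [Matrix.zero_mulVec, Matrix.neg_mulVec, add_zero, Sum.elim_inr, Pi.neg_apply, norm_neg]
    linarith

/-- continuous version -/
def L2c (n : ℕ) : Matrix (Fin n) (Fin n) ℂ →L[ℂ] Matrix (Fin n ⊕ Fin n) (Fin n ⊕ Fin n) ℂ :=
  (L2 n).mkContinuous 1 fun Q => L2_le n Q

lemma Lb_eq {n : ℕ} (Q C : Matrix (Fin n) (Fin n) ℂ) : Lb Q C = 1 + L1c n Q + L2c n C := by
  change Lb Q C = 1 + Matrix.fromBlocks 0 (-Q) 0 0 + Matrix.fromBlocks 0 0 (-C) 0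
  rw [Lb, ← Matrix.fromBlocks_one, Matrix.fromBlocks_add, Matrix.fromBlocks_add]
  simp

lemma Lb_continuous {n : ℕ} :
    Continuous fun p : Matrix (Fin n) (Fin n) ℂ × Matrix (Fin n) (Fin n) ℂ => Lb p.1 p.2 := by
  simp only [Lb_eq]
  fun_prop

lemma propagate {n : ℕ} {Pf Cf : ℂ → Matrix (Fin n) (Fin n) ℂ}
    (hP : DiffContOnCl ℂ Pf {z | 0 < z.re}) (hC : DiffContOnCl ℂ Cf {z | 0 < z.re})
    {B : ℝ} (hPb : ∀ s : ℂ, 0 ≤ s.re → ‖Pf s‖ ≤ B) (hCb : ∀ s : ℂ, 0 ≤ s.re → ‖Cf s‖ ≤ B)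
    {κ : ℝ} (hκ : 0 < κ)
    (h : ∀ ω : ℝ, ∀ τ ∈ Set.Icc (0 : ℝ) 1, LB κ (Lb ((τ : ℂ) • Pf (jw ω)) (Cf (jw ω)))) :
    ∀ s : ℂ, 0 ≤ s.re → ∀ τ ∈ Set.Icc (0 : ℝ) 1, LB κ (Lb ((τ : ℂ) • Pf s) (Cf s)) := by
  have hB : 0 ≤ B := (norm_nonneg _).trans (hPb 0 (by simp))
  have hdc : ∀ τ : ℝ, DiffContOnCl ℂ (fun s => Lb ((τ : ℂ) • Pf s) (Cf s)) {z | 0 < z.re} := by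
    intro τ
    simp only [Lb_eq]
    refine DiffContOnCl.add (DiffContOnCl.add diffContOnCl_const ?_) ?_
    · exact (L1c n).differentiable.comp_diffContOnCl
        (show DiffContOnCl ℂ (fun s => (τ : ℂ) • Pf s) {z | 0 < z.re} from hP.const_smul (τ : ℂ))
    · exact (L2c n).differentiable.comp_diffContOnCl hC
  have hdiff : ∀ (s : ℂ) (τ τ' : ℝ) (z : Fin n ⊕ Fin n → ℂ), 0 ≤ s.re →
      ‖Lb ((τ : ℂ) • Pf s) (Cf s) *ᵥ z - Lb ((τ' : ℂ) • Pf s) (Cf s) *ᵥ z‖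
        ≤ |τ - τ'| * (B) * ‖z‖ := by
    intro s τ τ' z hs
    rw [← Matrix.sub_mulVec]
    have h1 : Lb ((τ : ℂ) • Pf s) (Cf s) - Lb ((τ' : ℂ) • Pf s) (Cf s)
        = ((τ - τ' : ℝ) : ℂ) • L1c n (Pf s) := by
      rw [Lb_eq, Lb_eq, map_smul, map_smul]
      push_cast
      rw [sub_smul]; abel
    refine (Matrix.linfty_opNorm_mulVec _ _).trans ?_
    gcongr
    rw [h1, norm_smul, Complex.norm_real, Real.norm_eq_abs]
    gcongr
    exact (L1_le n (Pf s)).trans (by simpa using hPb s hs)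
  -- base
  have hbase : ∃ κ' > 0, ∀ s : ℂ, 0 ≤ s.re → LB κ' (Lb (((0 : ℝ) : ℂ) • Pf s) (Cf s)) := by
    have hM : 0 < ‖(1 : Matrix (Fin n ⊕ Fin n) (Fin n ⊕ Fin n) ℂ)‖ + B + 1 := by positivity
    refine ⟨(‖(1 : Matrix (Fin n ⊕ Fin n) (Fin n ⊕ Fin n) ℂ)‖ + B + 1)⁻¹, by positivity, ?_⟩
    intro s hs z
    have h1 : Lb 0 (-Cf s) * Lb (((0 : ℝ) : ℂ) • Pf s) (Cf s) = 1 := by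
      rw [Complex.ofReal_zero, zero_smul, Lb, Lb, Matrix.fromBlocks_multiply, ← Matrix.fromBlocks_one]
      simp
    have h2 : ‖Lb 0 (-Cf s)‖ ≤ ‖(1 : Matrix (Fin n ⊕ Fin n) (Fin n ⊕ Fin n) ℂ)‖ + B + 1 := by
      rw [Lb_eq, map_zero, add_zero, map_neg]
      refine (norm_add_le _ _).trans ?_
      rw [norm_neg]
      have : ‖L2c n (Cf s)‖ ≤ B := (L2_le n (Cf s)).trans (by simpa using hCb s hs)
      linarith
    have h3 := Matrix.linfty_opNorm_mulVec (Lb 0 (-Cf s)) (Lb (((0 : ℝ) : ℂ) • Pf s) (Cf s) *ᵥ z)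
    rw [Matrix.mulVec_mulVec, h1, Matrix.one_mulVec] at h3
    rw [inv_mul_eq_div, div_le_iff₀ hM]
    refine h3.trans ?_
    rw [mul_comm]
    gcongr
  -- step
  set η : ℝ := κ / (2 * (B + 1)) with hη
  have hη0 : 0 < η := by positivity
  have key : ∀ k : ℕ, ∀ τ ∈ Set.Icc (0 : ℝ) 1, τ ≤ k * η →
      ∀ s : ℂ, 0 ≤ s.re → LB κ (Lb ((τ : ℂ) • Pf s) (Cf s)) := by
    intro k
    induction k with
    | zero =>
      intro τ hτ hk s hs
      have : τ = 0 := le_antisymm (by simpa using hk) hτ.1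
      subst this
      obtain ⟨κ', hκ', hb⟩ := hbase
      exact pl_step (hdc 0) hκ hκ' hb (fun ω => h ω 0 (by simp)) s hs
    | succ k ih =>
      intro τ hτ hk s hs
      refine pl_step (hdc τ) hκ (κ' := κ / 2) (by positivity) ?_ (fun ω => h ω τ hτ) s hs
      intro s hs z
      set τ' := max 0 (τ - η) with hτ'
      have h1 : τ' ∈ Set.Icc (0 : ℝ) 1 :=
        ⟨le_max_left _ _, max_le zero_le_one (by linarith [hτ.2])⟩
      have h2 : τ' ≤ k * η := max_le (by positivity) (by push_cast at hk; linarith)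
      have h3 := ih τ' h1 h2 s hs z
      have h4 := hdiff s τ τ' z hs
      have h5 : |τ - τ'| ≤ η := by
        rw [abs_le]
        constructor
        · have : τ' ≤ τ := max_le hτ.1 (by linarith)
          linarith
        · have : τ - η ≤ τ' := le_max_right _ _
          linarith
      have h6 : |τ - τ'| * (B) ≤ κ / 2 := by
        have h7 : η * (B + 1) = κ / 2 := by rw [hη]; field_simp
        nlinarith
      have h8 := norm_sub_norm_le (Lb ((τ' : ℂ) • Pf s) (Cf s) *ᵥ z) (Lb ((τ : ℂ) • Pf s) (Cf s) *ᵥ z)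
      rw [norm_sub_rev] at h8
      have h9 := mul_le_mul_of_nonneg_right h6 (norm_nonneg z)
      linarith
  intro s hs τ hτ
  obtain ⟨k, hk⟩ := exists_nat_ge (τ / η)
  exact key k τ hτ (by rwa [div_le_iff₀ hη0] at hk) s hs

lemma Lb_det {n : ℕ} (Q C : Matrix (Fin n) (Fin n) ℂ) : (Lb Q C).det = (1 - Q * C).det := by
  rw [Lb, Matrix.det_fromBlocks_one₂₂]
  simp

lemma LB_of_sphere {m : Type*} [Fintype m] {κ : ℝ} {A : Matrix m m ℂ}
    (h : ∀ z : m → ℂ, ‖z‖ = 1 → κ ≤ ‖A *ᵥ z‖) : LB κ A := by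
  intro z
  by_cases hz : z = 0
  · simp [hz]
  have hz' : 0 < ‖z‖ := norm_pos_iff.2 hz
  have h1 := h (((‖z‖⁻¹ : ℝ) : ℂ) • z) (by
    rw [norm_smul, Complex.norm_real, norm_inv, norm_norm, inv_mul_cancel₀ hz'.ne'])
  rw [Matrix.mulVec_smul, norm_smul, Complex.norm_real, norm_inv, norm_norm, inv_mul_eq_div,
    le_div_iff₀ hz'] at h1
  exact h1

lemma near_bound {n : ℕ} {X Y : Matrix (Fin n) (Fin n) ℂ}
    (h : ∀ τ ∈ Set.Icc (0 : ℝ) 1, (Lb ((τ : ℂ) • X) Y).det ≠ 0) :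
    ∃ κ > 0, ∀ᶠ p in 𝓝 (X, Y), ∀ τ ∈ Set.Icc (0 : ℝ) 1, LB κ (Lb ((τ : ℂ) • p.1) p.2) := by
  set S : Set (ℝ × (Fin n ⊕ Fin n → ℂ)) := Set.Icc (0 : ℝ) 1 ×ˢ Metric.sphere 0 1
  have hS : IsCompact S := isCompact_Icc.prod (isCompact_sphere _ _)
  have hcont : Continuous fun q : (Matrix (Fin n) (Fin n) ℂ × Matrix (Fin n) (Fin n) ℂ) ×
      (ℝ × (Fin n ⊕ Fin n → ℂ)) => ‖Lb ((q.2.1 : ℂ) • q.1.1) q.1.2 *ᵥ q.2.2‖ := by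
    refine continuous_norm.comp (Continuous.matrix_mulVec ?_ (by fun_prop))
    exact Lb_continuous.comp (by fun_prop :
      Continuous fun q : (Matrix (Fin n) (Fin n) ℂ × Matrix (Fin n) (Fin n) ℂ) ×
      (ℝ × (Fin n ⊕ Fin n → ℂ)) => ((q.2.1 : ℂ) • q.1.1, q.1.2))
  have hpos : ∀ b ∈ S, (0 : ℝ) < ‖Lb ((b.1 : ℂ) • X) Y *ᵥ b.2‖ := by
    rintro ⟨τ, z⟩ ⟨hτ, hz⟩
    rw [norm_pos_iff]
    intro h0
    have hz0 : z = 0 := Matrix.eq_zero_of_mulVec_eq_zero (h τ hτ) h0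
    simp [hz0] at hz
  obtain ⟨κ, hκ, hk⟩ := hS.exists_forall_le'
    ((hcont.comp (by fun_prop : Continuous fun b : ℝ × (Fin n ⊕ Fin n → ℂ) => ((X, Y), b))).continuousOn)
    hpos
  refine ⟨κ / 2, by positivity, ?_⟩
  have := hS.eventually_forall_of_forall_eventually (x₀ := (X, Y))
    (P := fun p b => κ / 2 < ‖Lb ((b.1 : ℂ) • p.1) p.2 *ᵥ b.2‖) (by
      intro b hb
      refine (hcont.tendsto ((X, Y), b)).eventually (lt_mem_nhds ?_)
      have := hk b hb
      simp only [Function.comp] at this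
      dsimp only
      linarith)
  filter_upwards [this] with p hp τ hτ
  refine LB_of_sphere fun z hz => ?_
  exact (hp (τ, z) ⟨hτ, by simpa using hz⟩).le

lemma dot_bound {n : ℕ} (x u : Fin n → ℂ) : ‖star x ⬝ᵥ u‖ ≤ n * (‖x‖ * ‖u‖) := by
  rw [dotProduct]
  refine (norm_sum_le _ _).trans ?_
  have : ∀ i ∈ Finset.univ, ‖star x i * u i‖ ≤ ‖x‖ * ‖u‖ := by
    intro i _
    rw [norm_mul, Pi.star_apply, norm_star]
    gcongr
    · exact norm_le_pi_norm x i
    · exact norm_le_pi_norm u i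
  refine (Finset.sum_le_sum this).trans ?_
  simp

lemma dot_conj {n : ℕ} (x y : Fin n → ℂ) : (star y ⬝ᵥ x).im = - (star x ⬝ᵥ y).im := by
  have : star y ⬝ᵥ x = star (star x ⬝ᵥ y) := by
    simp [dotProduct, star_sum, mul_comm]
  rw [this]; simp

set_option maxHeartbeats 1000000 in
lemma mid_bound {n : ℕ} {ε B : ℝ} (hε : 0 < ε) (hB : 0 ≤ B) :
    ∃ κ > 0, ∀ (σ : ℝ) (τ : ℝ) (Q C : Matrix (Fin n) (Fin n) ℂ), |σ| = 1 → 0 ≤ τ → ‖C‖ ≤ B →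
      (∀ x, σ * (star x ⬝ᵥ C *ᵥ x).im ≤ - ε * ‖x‖ ^ 2) →
      (∀ x, σ * (star x ⬝ᵥ Q *ᵥ x).im ≤ 0) → LB κ (Lb ((τ : ℂ) • Q) C) := by
  set k : ℝ := n * (2 + B) / ε + 1 with hk
  have hk1 : 1 ≤ k := by rw [hk]; have : 0 ≤ n * (2 + B) / ε := by positivity
                         linarith
  refine ⟨(B * k + 1 + k)⁻¹, by positivity, ?_⟩
  intro σ τ Q C hσ hτ hC hCn hQ z
  set x := z ∘ Sum.inl with hx
  set y := z ∘ Sum.inr with hy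
  set w := ‖Lb ((τ : ℂ) • Q) C *ᵥ z‖ with hw
  have hL : Lb ((τ : ℂ) • Q) C *ᵥ z = Sum.elim (x - (τ : ℂ) • (Q *ᵥ y)) (y - C *ᵥ x) := by
    rw [Lb, Matrix.fromBlocks_mulVec]
    congr 1
    · simp [Matrix.neg_mulVec, Matrix.smul_mulVec, sub_eq_add_neg, hx, hy]
    · simp [Matrix.neg_mulVec, sub_eq_add_neg, hx, hy, add_comm]
  set u := x - (τ : ℂ) • (Q *ᵥ y) with hu
  set v := y - C *ᵥ x with hv
  have hw0 : 0 ≤ w := norm_nonneg _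
  have huw : ‖u‖ ≤ w := by
    rw [pi_norm_le_iff_of_nonneg hw0]
    intro i
    have := norm_le_pi_norm (Lb ((τ : ℂ) • Q) C *ᵥ z) (Sum.inl i)
    rw [hL] at this
    rw [hw, hL]
    exact this
  have hvw : ‖v‖ ≤ w := by
    rw [pi_norm_le_iff_of_nonneg hw0]
    intro i
    have := norm_le_pi_norm (Lb ((τ : ℂ) • Q) C *ᵥ z) (Sum.inr i)
    rw [hL] at this
    rw [hw, hL]
    exact this
  have hyB : ‖y‖ ≤ B * ‖x‖ + w := by
    have : y = C *ᵥ x + v := by rw [hv]; abel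
    rw [this]
    refine (norm_add_le _ _).trans ?_
    have := (Matrix.linfty_opNorm_mulVec C x).trans (mul_le_mul_of_nonneg_right hC (norm_nonneg x))
    linarith
  have e1 : (star x ⬝ᵥ y).im = (star x ⬝ᵥ C *ᵥ x).im + (star x ⬝ᵥ v).im := by
    rw [hv, dotProduct_sub, Complex.sub_im]; ring
  have e2 : (star y ⬝ᵥ x).im = τ * (star y ⬝ᵥ Q *ᵥ y).im + (star y ⬝ᵥ u).im := by
    rw [hu, dotProduct_sub, Complex.sub_im, dotProduct_smul, smul_eq_mul, Complex.im_ofReal_mul]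
    ring
  have e3 := dot_conj x y
  have b1 : |σ * (star x ⬝ᵥ v).im| ≤ n * (‖x‖ * ‖v‖) := by
    rw [abs_mul, hσ, one_mul]; exact (Complex.abs_im_le_norm _).trans (dot_bound x v)
  have b2 : |σ * (star y ⬝ᵥ u).im| ≤ n * (‖y‖ * ‖u‖) := by
    rw [abs_mul, hσ, one_mul]; exact (Complex.abs_im_le_norm _).trans (dot_bound y u)
  have c1 := hCn x
  have c2 := mul_le_mul_of_nonneg_left (hQ y) hτ
  have c3 : ε * ‖x‖ ^ 2 ≤ n * (‖x‖ * ‖v‖) + n * (‖y‖ * ‖u‖) := by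
    have e4 : σ * (star x ⬝ᵥ C *ᵥ x).im + σ * (star x ⬝ᵥ v).im + τ * (σ * (star y ⬝ᵥ Q *ᵥ y).im)
        + σ * (star y ⬝ᵥ u).im = 0 := by
      linear_combination σ * e3 - σ * e1 - σ * e2
    have := abs_le.1 b1
    have := abs_le.1 b2
    linarith
  have c4 : ε * ‖x‖ ^ 2 ≤ n * (‖x‖ * w + (B * ‖x‖ + w) * w) := by
    refine c3.trans ?_
    rw [← mul_add]
    have hx0 := norm_nonneg x
    gcongr
  have c5 : ‖x‖ ≤ k * w := by
    by_contra hlt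
    push Not at hlt
    have hxw : w ≤ ‖x‖ := by nlinarith
    have hxpos : 0 < ‖x‖ := lt_of_le_of_lt (by positivity) hlt
    have d1 : ε * ‖x‖ ^ 2 ≤ (n * (2 + B) * w) * ‖x‖ := by
      refine c4.trans ?_
      have : ‖x‖ * w + (B * ‖x‖ + w) * w ≤ (2 + B) * w * ‖x‖ := by nlinarith
      calc _ ≤ n * ((2 + B) * w * ‖x‖) := by gcongr
        _ = _ := by ring
    have d2 : ε * ‖x‖ ≤ n * (2 + B) * w := by
      refine le_of_mul_le_mul_right ?_ hxpos
      calc _ = ε * ‖x‖ ^ 2 := by ring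
        _ ≤ _ := d1
    have d3 : ε * k = n * (2 + B) + ε := by rw [hk]; field_simp
    have d4 : ε * (k * w) < ε * ‖x‖ := by gcongr
    have : 0 ≤ ε * w := by positivity
    nlinarith
  have c6 : ‖z‖ ≤ (B * k + 1 + k) * w := by
    rw [pi_norm_le_iff_of_nonneg (by positivity)]
    have f1 : ‖y‖ ≤ (B * k + 1) * w := by
      have f0 := mul_le_mul_of_nonneg_left c5 hB
      linarith
    have f2 : 0 ≤ (B * k + 1) * w := by positivity
    have f3 : 0 ≤ k * w := by positivity
    have f4 : (B * k + 1 + k) * w = (B * k + 1) * w + k * w := by ring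
    rintro (i | i)
    · have := norm_le_pi_norm x i
      simp only [hx, Function.comp] at this
      linarith
    · have := norm_le_pi_norm y i
      simp only [hy, Function.comp] at this
      linarith
  rw [inv_mul_eq_div, div_le_iff₀ (by positivity)]
  linarith

end analytic

section axis
open scoped Matrix.Norms.Operator

lemma LB.mono {m : Type*} [Fintype m] {κ κ' : ℝ} {A : Matrix m m ℂ} (h : LB κ A) (hk : κ' ≤ κ) :
    LB κ' A := fun z => (mul_le_mul_of_nonneg_right hk (norm_nonneg z)).trans (h z)

lemma q_smul {n : ℕ} (M : Matrix (Fin n) (Fin n) ℂ) (r : ℝ) (x : Fin n → ℂ) :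
    (star ((r : ℂ) • x) ⬝ᵥ M *ᵥ ((r : ℂ) • x)).im = r ^ 2 * (star x ⬝ᵥ M *ᵥ x).im := by
  rw [Matrix.mulVec_smul, star_smul, dotProduct_smul, smul_dotProduct]
  simp only [smul_eq_mul, RCLike.star_def, Complex.conj_ofReal]
  rw [Complex.im_ofReal_mul, Complex.im_ofReal_mul]
  ring

lemma q_of_sphere {n : ℕ} {M : Matrix (Fin n) (Fin n) ℂ} {σ ε : ℝ}
    (h : ∀ x : Fin n → ℂ, ‖x‖ = 1 → σ * (star x ⬝ᵥ M *ᵥ x).im ≤ - ε) (x : Fin n → ℂ) :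
    σ * (star x ⬝ᵥ M *ᵥ x).im ≤ - ε * ‖x‖ ^ 2 := by
  by_cases hz : x = 0
  · simp [hz]
  have hz' : 0 < ‖x‖ := norm_pos_iff.2 hz
  have h1 := h (((‖x‖⁻¹ : ℝ) : ℂ) • x) (by
    rw [norm_smul, Complex.norm_real, norm_inv, norm_norm, inv_mul_cancel₀ hz'.ne'])
  rw [q_smul] at h1
  have h2 := mul_le_mul_of_nonneg_right h1 (sq_nonneg ‖x‖)
  have h3 : σ * (‖x‖⁻¹ ^ 2 * (star x ⬝ᵥ M *ᵥ x).im) * ‖x‖ ^ 2 = σ * (star x ⬝ᵥ M *ᵥ x).im := by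
    field_simp
  linarith

lemma q_cont {n : ℕ} {T : Type*} [TopologicalSpace T] {Cf : T → Matrix (Fin n) (Fin n) ℂ}
    (hc : Continuous Cf) :
    Continuous fun p : T × (Fin n → ℂ) => (star p.2 ⬝ᵥ Cf p.1 *ᵥ p.2).im := by
  refine Complex.continuous_im.comp (Continuous.dotProduct (by fun_prop) ?_)
  exact Continuous.matrix_mulVec (hc.comp continuous_fst) continuous_snd

lemma axis_bound {n : ℕ} {Cf : ℝ → Matrix (Fin n) (Fin n) ℂ} {X0 Xi Yi : Matrix (Fin n) (Fin n) ℂ}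
    (hc : Continuous Cf) (hinf : Tendsto Cf (cocompact ℝ) (𝓝 Yi))
    (hneg : ∀ ω : ℝ, 0 < ω → ∀ x : Fin n → ℂ, x ≠ 0 → (star x ⬝ᵥ Cf ω *ᵥ x).im < 0)
    (hpos : ∀ ω : ℝ, ω < 0 → ∀ x : Fin n → ℂ, x ≠ 0 → 0 < (star x ⬝ᵥ Cf ω *ᵥ x).im)
    (h0 : ∀ τ ∈ Set.Icc (0 : ℝ) 1, (Lb ((τ : ℂ) • X0) (Cf 0)).det ≠ 0)
    (hi : ∀ τ ∈ Set.Icc (0 : ℝ) 1, (Lb ((τ : ℂ) • Xi) Yi).det ≠ 0) :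
    ∃ e > 0, ∀ r : ℝ, 0 < r → r ≤ e → ∃ κ > 0,
      ∀ (ω τ : ℝ) (Q : Matrix (Fin n) (Fin n) ℂ), τ ∈ Set.Icc (0 : ℝ) 1 →
      (|ω| < r → ‖Q - X0‖ < e) → (1 / r < |ω| → ‖Q - Xi‖ < e) →
      (0 < ω → ∀ x : Fin n → ℂ, (star x ⬝ᵥ Q *ᵥ x).im ≤ 0) →
      (ω < 0 → ∀ x : Fin n → ℂ, 0 ≤ (star x ⬝ᵥ Q *ᵥ x).im) →
      LB κ (Lb ((τ : ℂ) • Q) (Cf ω)) := by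
  obtain ⟨κ0, hκ0, ev0⟩ := near_bound h0
  obtain ⟨κ1, hκ1, ev1⟩ := near_bound hi
  obtain ⟨e0, he0, n0⟩ := Metric.eventually_nhds_iff.1 ev0
  obtain ⟨e1, he1, n1⟩ := Metric.eventually_nhds_iff.1 ev1
  obtain ⟨d0, hd0, m0⟩ := Metric.continuousAt_iff.1 (hc.continuousAt (x := 0)) e0 he0
  have hR : ∃ R : ℝ, ∀ ω : ℝ, R ≤ |ω| → dist (Cf ω) Yi < e1 := by
    have h1 := hinf.eventually (Metric.ball_mem_nhds Yi he1)
    rw [← Metric.cobounded_eq_cocompact] at h1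
    obtain ⟨R, -, h2⟩ := (Filter.hasBasis_cobounded_norm).eventually_iff.1 h1
    exact ⟨R, fun ω hω => h2 hω⟩
  obtain ⟨R, hR⟩ := hR
  set e : ℝ := min (min e0 d0) (min e1 (1 / (|R| + 1))) with hr
  have her : 0 < e := by
    refine lt_min (lt_min he0 hd0) (lt_min he1 (by positivity))
  refine ⟨e, her, ?_⟩
  intro r hr0 hre
  set K : Set ℝ := {ω | r ≤ |ω| ∧ |ω| ≤ 1 / r} with hK
  have hKc : IsCompact K := by
    refine IsCompact.of_isClosed_subset (isCompact_Icc (a := -(1 / r)) (b := 1 / r)) ?_ ?_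
    · exact (isClosed_le continuous_const continuous_abs).inter
        (isClosed_le continuous_abs continuous_const)
    · intro ω hω
      exact abs_le.1 hω.2
  obtain ⟨ε, hε, hεle⟩ := (hKc.prod (isCompact_sphere (0 : Fin n → ℂ) 1)).exists_forall_le'
    ((continuous_abs.comp (q_cont hc)).continuousOn) (a := 0) (by
      rintro ⟨ω, x⟩ ⟨hω, hx⟩
      have hx0 : x ≠ 0 := by
        rintro rfl
        simp at hx
      have hω0 : ω ≠ 0 := by
        rintro rfl
        have := hω.1
        simp at this
        linarith
      simp only [Function.comp]
      rw [abs_pos]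
      rcases lt_or_gt_of_ne hω0 with h | h
      · exact (hpos ω h x hx0).ne'
      · exact (hneg ω h x hx0).ne)
  obtain ⟨B, hB⟩ := hKc.exists_bound_of_continuousOn hc.continuousOn
  obtain ⟨κ2, hκ2, mid⟩ := mid_bound (n := n) hε (abs_nonneg B)
  refine ⟨min κ0 (min κ1 κ2), lt_min hκ0 (lt_min hκ1 hκ2), ?_⟩
  intro ω τ Q hτ g0 g1 gp gn
  by_cases c1 : |ω| < r
  · refine LB.mono (n0 (y := (Q, Cf ω)) ?_ τ hτ) (min_le_left _ _)
    rw [Prod.dist_eq]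
    refine max_lt ?_ ?_
    · rw [dist_eq_norm]
      exact (g0 c1).trans_le ((min_le_left _ _).trans (min_le_left _ _))
    · refine m0 ?_
      rw [Real.dist_eq, sub_zero]
      exact (c1.trans_le hre).trans_le ((min_le_left _ _).trans (min_le_right _ _))
  by_cases c2 : 1 / r < |ω|
  · refine LB.mono (n1 (y := (Q, Cf ω)) ?_ τ hτ) ((min_le_right _ _).trans (min_le_left _ _))
    rw [Prod.dist_eq]
    refine max_lt ?_ ?_
    · rw [dist_eq_norm]
      exact (g1 c2).trans_le ((min_le_right _ _).trans (min_le_left _ _))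
    · refine hR ω ?_
      have h3 : r ≤ 1 / (|R| + 1) := hre.trans <| (min_le_right _ _).trans (min_le_right _ _)
      have h4 : |R| + 1 ≤ 1 / r := by
        rw [le_div_iff₀ hr0]
        rw [le_div_iff₀ (by positivity)] at h3
        linarith
      linarith [le_abs_self R]
  push Not at c1 c2
  have hωK : ω ∈ K := ⟨c1, c2⟩
  have hCB : ‖Cf ω‖ ≤ |B| := (hB ω hωK).trans (le_abs_self B)
  have hsp : ∀ x : Fin n → ℂ, ‖x‖ = 1 → ε ≤ |(star x ⬝ᵥ Cf ω *ᵥ x).im| := fun x hx =>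
    hεle (ω, x) ⟨hωK, by simpa using hx⟩
  have hx0 : ∀ x : Fin n → ℂ, ‖x‖ = 1 → x ≠ 0 := by
    rintro x hx rfl
    simp at hx
  refine LB.mono ?_ ((min_le_right _ _).trans (min_le_right _ _))
  rcases lt_trichotomy ω 0 with h | h | h
  · refine mid (-1) τ Q (Cf ω) (by simp) hτ.1 hCB (q_of_sphere fun x hx => ?_) fun x => ?_
    · have := hsp x hx
      rw [abs_of_pos (hpos ω h x (hx0 x hx))] at this
      linarith
    · linarith [gn h x]
  · subst h
    simp at c1
    linarith
  · refine mid 1 τ Q (Cf ω) (by simp) hτ.1 hCB (q_of_sphere fun x hx => ?_) fun x => ?_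
    · have := hsp x hx
      rw [abs_of_neg (hneg ω h x (hx0 x hx))] at this
      linarith
    · linarith [gp h x]

end axis

section middle
open scoped Matrix.Norms.Operator

lemma jw_tendsto : Tendsto jw (cocompact ℝ) (Bornology.cobounded ℂ) := by
  rw [← tendsto_norm_atTop_iff_cobounded]
  have : (fun x => ‖jw x‖) = fun x : ℝ => ‖x‖ := by
    funext x; simp [jw]
  rw [this, ← Metric.cobounded_eq_cocompact]
  exact tendsto_norm_cobounded_atTop

lemma jw_cont : Continuous jw := by unfold jw; fun_prop

lemma jw_re (ω : ℝ) : (jw ω).re = 0 := by simp [jw]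
lemma jw_im (ω : ℝ) : (jw ω).im = ω := by simp [jw]

/-- first-order lag with an offset -/
def cF (α β γ : ℝ) (s : ℂ) : ℂ := (α : ℂ) * (1 + (β : ℂ) * s)⁻¹ + (γ : ℂ)

lemma cF_ne {β : ℝ} (hβ : 0 < β) {s : ℂ} (hs : 0 ≤ s.re) : 1 ≤ ‖1 + (β : ℂ) * s‖ := by
  refine le_trans ?_ (Complex.re_le_norm _)
  simp only [Complex.add_re, Complex.one_re, Complex.re_ofReal_mul]
  have := mul_nonneg hβ.le hs
  linarith

lemma cF_ne' {β : ℝ} (hβ : 0 < β) {s : ℂ} (hs : 0 ≤ s.re) : 1 + (β : ℂ) * s ≠ 0 := by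
  have := cF_ne hβ hs
  intro h
  rw [h, norm_zero] at this
  linarith

lemma cF_bound {α β γ : ℝ} (hβ : 0 < β) {s : ℂ} (hs : 0 ≤ s.re) : ‖cF α β γ s‖ ≤ |α| + |γ| := by
  refine (norm_add_le _ _).trans ?_
  rw [norm_mul, norm_inv, Complex.norm_real, Complex.norm_real, Real.norm_eq_abs, Real.norm_eq_abs]
  have := inv_le_one_of_one_le₀ (cF_ne hβ hs)
  have := mul_le_mul_of_nonneg_left this (abs_nonneg α)
  linarith

lemma cF_diff {α β γ : ℝ} (hβ : 0 < β) {s : ℂ} (hs : 0 ≤ s.re) : DifferentiableAt ℂ (cF α β γ) s := by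
  have := cF_ne' hβ hs
  unfold cF
  fun_prop (disch := assumption)

lemma cF_tendsto {α β γ : ℝ} (hβ : 0 < β) :
    Tendsto (cF α β γ) (Bornology.cobounded ℂ) (𝓝 (γ : ℂ)) := by
  have h1 : Tendsto (fun s : ℂ => 1 + (β : ℂ) * s) (Bornology.cobounded ℂ) (Bornology.cobounded ℂ) :=
    (tendsto_const_add_cobounded 1).comp (tendsto_mul_left_cobounded (by exact_mod_cast hβ.ne'))
  have h2 := ((tendsto_inv₀_cobounded.comp h1).const_mul (α : ℂ)).add_const (γ : ℂ)
  rw [mul_zero, zero_add] at h2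
  exact h2

lemma cF_im {α β γ : ℝ} (ω : ℝ) : (cF α β γ (jw ω)).im = - (α * β * ω) / (1 + β ^ 2 * ω ^ 2) := by
  have h1 : 1 + (β : ℂ) * jw ω = ⟨1, β * ω⟩ := by
    apply Complex.ext <;> simp [jw]
  rw [cF, h1, Complex.add_im, Complex.im_ofReal_mul, Complex.inv_im, Complex.normSq_mk, Complex.ofReal_im]
  have : 1 * 1 + β * ω * (β * ω) = 1 + β ^ 2 * ω ^ 2 := by ring
  rw [this]
  ring

lemma q_im {n : ℕ} {A D : Matrix (Fin n) (Fin n) ℂ} (c : ℂ) (x : Fin n → ℂ)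
    (hA : (star x ⬝ᵥ A *ᵥ x).im = 0) (hD : (star x ⬝ᵥ D *ᵥ x).im = 0) :
    (star x ⬝ᵥ (A + c • D) *ᵥ x).im = c.im * (star x ⬝ᵥ D *ᵥ x).re := by
  rw [Matrix.add_mulVec, dotProduct_add, Matrix.smul_mulVec, dotProduct_smul, Complex.add_im, hA,
    smul_eq_mul, Complex.mul_im, hD]
  ring

lemma diffContOnCl_of {E : Type*} [NormedAddCommGroup E] [NormedSpace ℂ E] {f : ℂ → E}
    (h : ∀ s : ℂ, 0 ≤ s.re → DifferentiableAt ℂ f s) : DiffContOnCl ℂ f {z | 0 < z.re} := by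
  refine DifferentiableOn.diffContOnCl ?_
  rw [show closure {z : ℂ | 0 < z.re} = {z | 0 ≤ z.re} from Complex.closure_setOfPred_lt_re 0]
  exact fun s hs => (h s hs).differentiableWithinAt

lemma mid_det {n : ℕ} {P0 Pi C0 Ci : Matrix (Fin n) (Fin n) ℂ}
    (hP0 : ∀ x : Fin n → ℂ, (star x ⬝ᵥ P0 *ᵥ x).im = 0)
    (hPi : ∀ x : Fin n → ℂ, (star x ⬝ᵥ Pi *ᵥ x).im = 0)
    (hP : ∀ x : Fin n → ℂ, 0 ≤ (star x ⬝ᵥ (P0 - Pi) *ᵥ x).re)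
    (hC0 : ∀ x : Fin n → ℂ, (star x ⬝ᵥ C0 *ᵥ x).im = 0)
    (hCi : ∀ x : Fin n → ℂ, (star x ⬝ᵥ Ci *ᵥ x).im = 0)
    (hC : ∀ x : Fin n → ℂ, 0 ≤ (star x ⬝ᵥ (C0 - Ci) *ᵥ x).re)
    (h0 : ∀ τ ∈ Set.Icc (0 : ℝ) 1, (Lb ((τ : ℂ) • P0) C0).det ≠ 0)
    (hi : ∀ τ ∈ Set.Icc (0 : ℝ) 1, (Lb ((τ : ℂ) • Pi) Ci).det ≠ 0) :
    ∀ τ ∈ Set.Icc (0 : ℝ) 1, (Lb ((τ : ℂ) • P0) Ci).det ≠ 0 := by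
  obtain ⟨κ0, hκ0, ev0⟩ := near_bound h0
  obtain ⟨κ1, hκ1, ev1⟩ := near_bound hi
  have t0 : Tendsto (fun t : ℝ => (Pi + ((1 + t : ℝ) : ℂ) • (P0 - Pi), C0 + (t : ℂ) • (1 : Matrix (Fin n) (Fin n) ℂ)))
      (𝓝[>] 0) (𝓝 (P0, C0)) := by
    have : Continuous (fun t : ℝ => (Pi + ((1 + t : ℝ) : ℂ) • (P0 - Pi), C0 + (t : ℂ) • (1 : Matrix (Fin n) (Fin n) ℂ))) := by
      fun_prop
    have h := (this.tendsto 0).mono_left (nhdsWithin_le_nhds (s := Set.Ioi 0))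
    simpa using h
  have t1 : Tendsto (fun t : ℝ => (Pi, Ci + ((-t : ℝ) : ℂ) • (C0 + (t : ℂ) • (1 : Matrix (Fin n) (Fin n) ℂ) - Ci)))
      (𝓝[>] 0) (𝓝 (Pi, Ci)) := by
    have : Continuous (fun t : ℝ => (Pi, Ci + ((-t : ℝ) : ℂ) • (C0 + (t : ℂ) • (1 : Matrix (Fin n) (Fin n) ℂ) - Ci))) := by
      fun_prop
    have h := (this.tendsto 0).mono_left (nhdsWithin_le_nhds (s := Set.Ioi 0))
    simpa using h
  obtain ⟨t, ht0, ht1, ht⟩ := ((t0.eventually ev0).and ((t1.eventually ev1).and self_mem_nhdsWithin)).exists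
  replace ht : 0 < t := ht
  set D : Matrix (Fin n) (Fin n) ℂ := C0 + (t : ℂ) • 1 - Ci with hD
  have hDim : ∀ x : Fin n → ℂ, (star x ⬝ᵥ D *ᵥ x).im = 0 := by
    intro x
    have h1 : (0 : ℂ) ≤ star x ⬝ᵥ x := dotProduct_star_self_nonneg x
    have h2 := (Complex.le_def.1 h1).2
    rw [hD, Matrix.sub_mulVec, Matrix.add_mulVec, Matrix.smul_mulVec, Matrix.one_mulVec, dotProduct_sub,
      dotProduct_add, dotProduct_smul, Complex.sub_im, Complex.add_im, smul_eq_mul, Complex.im_ofReal_mul,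
      hC0, hCi, ← h2]
    simp
  have hDre : ∀ x : Fin n → ℂ, x ≠ 0 → 0 < (star x ⬝ᵥ D *ᵥ x).re := by
    intro x hx
    have h1 : (0 : ℂ) < star x ⬝ᵥ x := Matrix.dotProduct_star_self_pos_iff.2 hx
    have h2 := (Complex.lt_def.1 h1).1
    have h3 : D = (C0 - Ci) + (t : ℂ) • 1 := by rw [hD]; abel
    rw [h3, Matrix.add_mulVec, Matrix.smul_mulVec, Matrix.one_mulVec, dotProduct_add, dotProduct_smul,
      Complex.add_re, smul_eq_mul, Complex.re_ofReal_mul]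
    have := mul_pos ht h2
    have := hC x
    linarith
  have hPD : ∀ x : Fin n → ℂ, (star x ⬝ᵥ (P0 - Pi) *ᵥ x).im = 0 := by
    intro x
    rw [Matrix.sub_mulVec, dotProduct_sub, Complex.sub_im, hP0, hPi, sub_zero]
  set Pf : ℂ → Matrix (Fin n) (Fin n) ℂ := fun s => Pi + cF (1 + t) t 0 s • (P0 - Pi) with hPf
  set Cf : ℂ → Matrix (Fin n) (Fin n) ℂ := fun s => Ci + cF (1 + t) t⁻¹ (-t) s • D with hCf
  have hti : 0 < t⁻¹ := by positivity
  have dP : ∀ s : ℂ, 0 ≤ s.re → DifferentiableAt ℂ Pf s := fun s hs =>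
    ((cF_diff ht hs).smul_const (P0 - Pi)).const_add Pi
  have dC : ∀ s : ℂ, 0 ≤ s.re → DifferentiableAt ℂ Cf s := fun s hs =>
    ((cF_diff hti hs).smul_const D).const_add Ci
  have eP0 : Pf 0 = Pi + ((1 + t : ℝ) : ℂ) • (P0 - Pi) := by simp [hPf, cF]
  have eC0 : Cf 0 = C0 + (t : ℂ) • 1 := by simp [hCf, cF, hD]
  have cPj : Continuous fun ω => Pf (jw ω) := by
    refine continuous_iff_continuousAt.2 fun ω => ?_
    exact ContinuousAt.comp (f := jw) (dP (jw ω) (jw_re ω).ge).continuousAt jw_cont.continuousAt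
  have cCj : Continuous fun ω => Cf (jw ω) := by
    refine continuous_iff_continuousAt.2 fun ω => ?_
    exact ContinuousAt.comp (f := jw) (dC (jw ω) (jw_re ω).ge).continuousAt jw_cont.continuousAt
  have lP : Tendsto (fun ω => Pf (jw ω)) (cocompact ℝ) (𝓝 Pi) := by
    have := (((cF_tendsto (α := 1 + t) (γ := 0) ht).comp jw_tendsto).smul_const (P0 - Pi)).const_add Pi
    simpa using this
  have lC : Tendsto (fun ω => Cf (jw ω)) (cocompact ℝ) (𝓝 (Ci + ((-t : ℝ) : ℂ) • D)) :=
    (((cF_tendsto (α := 1 + t) (γ := -t) hti).comp jw_tendsto).smul_const D).const_add Ci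
  have hd : ∀ {β : ℝ} (ω : ℝ), 0 < β → 0 < (1 + t) * β / (1 + β ^ 2 * ω ^ 2) := fun ω hβ => by positivity
  have him : ∀ {β γ : ℝ} (ω : ℝ), (cF (1 + t) β γ (jw ω)).im = - ω * ((1 + t) * β / (1 + β ^ 2 * ω ^ 2)) := by
    intro β γ ω; rw [cF_im]; ring
  have hjw0 : jw 0 = 0 := by simp [jw]
  obtain ⟨e, he, hax⟩ := axis_bound (Cf := fun ω => Cf (jw ω)) (X0 := Pf 0) (Xi := Pi)
    (Yi := Ci + ((-t : ℝ) : ℂ) • D) cCj lC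
    (by
      intro ω hω x hx
      rw [hCf, q_im _ x (hCi x) (hDim x), him]
      have := mul_pos (mul_pos hω (hd ω hti)) (hDre x hx)
      linarith)
    (by
      intro ω hω x hx
      rw [hCf, q_im _ x (hCi x) (hDim x), him]
      exact mul_pos (mul_pos (by linarith) (hd ω hti)) (hDre x hx))
    (by
      intro τ hτ
      have := ht0 τ hτ
      rw [hjw0, eP0, eC0]
      exact ((Matrix.isUnit_iff_isUnit_det _).1 (this.isUnit hκ0)).ne_zero)
    (by
      intro τ hτ
      have := ht1 τ hτ
      exact ((Matrix.isUnit_iff_isUnit_det _).1 (this.isUnit hκ1)).ne_zero)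
  obtain ⟨d0, hd0, m0⟩ := Metric.continuousAt_iff.1 (cPj.continuousAt (x := 0)) e he
  have hR : ∃ R : ℝ, ∀ ω : ℝ, R ≤ |ω| → dist (Pf (jw ω)) Pi < e := by
    have h1 := lP.eventually (Metric.ball_mem_nhds Pi he)
    rw [← Metric.cobounded_eq_cocompact] at h1
    obtain ⟨R, -, h2⟩ := (Filter.hasBasis_cobounded_norm).eventually_iff.1 h1
    exact ⟨R, fun ω hω => h2 hω⟩
  obtain ⟨R, hR⟩ := hR
  set r := min e (min d0 (1 / (|R| + 1))) with hr
  have hr0 : 0 < r := lt_min he (lt_min hd0 (by positivity))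
  obtain ⟨κ, hκ, hLB⟩ := hax r hr0 (min_le_left _ _)
  set B := max (‖Pi‖ + (|1 + t| + |(0 : ℝ)|) * ‖P0 - Pi‖) (‖Ci‖ + (|1 + t| + |-t|) * ‖D‖) with hB
  have main := propagate (diffContOnCl_of dP) (diffContOnCl_of dC) (B := B)
    (by
      intro s hs
      refine le_trans ?_ (le_max_left _ _)
      refine (norm_add_le _ _).trans ?_
      rw [norm_smul]
      have := cF_bound (α := 1 + t) (γ := 0) ht hs
      gcongr)
    (by
      intro s hs
      refine le_trans ?_ (le_max_right _ _)
      refine (norm_add_le _ _).trans ?_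
      rw [norm_smul]
      have := cF_bound (α := 1 + t) (γ := -t) hti hs
      gcongr) hκ
    (by
      intro ω τ hτ
      refine hLB ω τ (Pf (jw ω)) hτ ?_ ?_ ?_ ?_
      · intro hω
        have := m0 (x := ω) (by
          rw [Real.dist_eq, sub_zero]
          exact hω.trans_le ((min_le_right _ _).trans (min_le_left _ _)))
        rw [hjw0, dist_eq_norm] at this
        exact this
      · intro hω
        have h3 : r ≤ 1 / (|R| + 1) := (min_le_right _ _).trans (min_le_right _ _)
        have h4 : |R| + 1 ≤ 1 / r := by
          rw [le_div_iff₀ hr0]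
          rw [le_div_iff₀ (by positivity)] at h3
          linarith
        have := hR ω (by linarith [le_abs_self R])
        rwa [dist_eq_norm] at this
      · intro hω x
        rw [hPf, q_im _ x (hPi x) (hPD x), him]
        have := mul_nonneg (mul_pos hω (hd ω ht)).le (hP x)
        linarith
      · intro hω x
        rw [hPf, q_im _ x (hPi x) (hPD x), him]
        exact mul_nonneg (mul_pos (by linarith) (hd ω ht)).le (hP x))
  intro τ hτ
  have h1 := main 1 (by simp) τ hτ
  have e1 : Pf 1 = P0 := by
    have : (1 + (t : ℂ)) ≠ 0 := by exact_mod_cast (by positivity : (1 + t) ≠ 0)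
    simp [hPf, cF, this]
  have e2 : Cf 1 = Ci := by
    have h3 : (1 + (t : ℂ)) ≠ 0 := by exact_mod_cast (by positivity : (1 + t) ≠ 0)
    have h4 : (t : ℂ) ≠ 0 := by exact_mod_cast ht.ne'
    have h5 : cF (1 + t) t⁻¹ (-t) 1 = 0 := by
      rw [cF]
      push_cast
      have : (1 + (t : ℂ)⁻¹ * 1) = (1 + t) / t := by field_simp; ring
      rw [this, inv_div]
      field_simp
      ring
    simp [hCf, h5]
  rw [e1, e2] at h1
  exact ((Matrix.isUnit_iff_isUnit_det _).1 (h1.isUnit hκ)).ne_zero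

end middle

section basicNI
open scoped Matrix.Norms.Operator

/-- quadratic form -/
def qf {n : ℕ} (M : Matrix (Fin n) (Fin n) ℂ) (x : Fin n → ℂ) : ℂ := star x ⬝ᵥ M *ᵥ x

lemma qf_sub {n : ℕ} (M N : Matrix (Fin n) (Fin n) ℂ) (x : Fin n → ℂ) :
    qf (M - N) x = qf M x - qf N x := by
  simp [qf, Matrix.sub_mulVec]

lemma qf_add {n : ℕ} (M N : Matrix (Fin n) (Fin n) ℂ) (x : Fin n → ℂ) :
    qf (M + N) x = qf M x + qf N x := by
  simp [qf, Matrix.add_mulVec]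

lemma qf_smul {n : ℕ} (c : ℂ) (M : Matrix (Fin n) (Fin n) ℂ) (x : Fin n → ℂ) :
    qf (c • M) x = c * qf M x := by
  simp [qf, Matrix.smul_mulVec]

lemma qf_conjTranspose {n : ℕ} (M : Matrix (Fin n) (Fin n) ℂ) (x : Fin n → ℂ) :
    qf Mᴴ x = star (qf M x) := by
  rw [qf, qf, dotProduct_mulVec, ← star_mulVec, star_dotProduct]

lemma qf_niKer {n : ℕ} (M : Matrix (Fin n) (Fin n) ℂ) (x : Fin n → ℂ) :
    (qf (niKer M) x).re = -2 * (qf M x).im := by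
  rw [niKer, qf_smul, qf_sub, qf_conjTranspose]
  simp
  ring

lemma qf_map_star {n : ℕ} (M : Matrix (Fin n) (Fin n) ℂ) (x : Fin n → ℂ) :
    qf (M.map star) x = star (qf M (star x)) := by
  simp only [qf, dotProduct, mulVec, Matrix.map_apply, star_sum, star_mul', Pi.star_apply, star_star]

lemma ev_star {n : ℕ} (G : Matrix (Fin n) (Fin n) (RatFunc ℝ)) (s : ℂ) :
    ev (star s) G = (ev s G).map star := by
  ext i j
  simp only [ev, Matrix.map_apply]
  exact evalC_conj _ _

lemma star_jw (ω : ℝ) : star (jw ω) = jw (-ω) := by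
  apply Complex.ext <;> simp [jw]

lemma regM_star {n : ℕ} {G : Matrix (Fin n) (Fin n) (RatFunc ℝ)} {s : ℂ} :
    RegM (star s) G ↔ RegM s G := by
  simp only [RegM, mem_reg, isPoleAt_conj]

lemma qf_continuous {n : ℕ} (x : Fin n → ℂ) : Continuous fun M : Matrix (Fin n) (Fin n) ℂ => qf M x := by
  unfold qf
  exact Continuous.dotProduct continuous_const (Continuous.matrix_mulVec continuous_id continuous_const)

lemma ev_differentiableAt {n : ℕ} {G : Matrix (Fin n) (Fin n) (RatFunc ℝ)} {s : ℂ} (h : RegM s G) :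
    DifferentiableAt ℂ (fun s => ev s G) s := by
  have e : (fun s => ev s G) = fun s => ∑ i, ∑ j, evalC (G i j) s • Matrix.single i j (1 : ℂ) := by
    funext s
    rw [Matrix.matrix_eq_sum_single (ev s G)]
    simp [ev, Matrix.smul_single]
  rw [e]
  refine DifferentiableAt.fun_sum fun i _ => DifferentiableAt.fun_sum fun j _ => ?_
  exact (evalC_differentiableAt (h i j)).smul_const _

/-- complexification of a real matrix -/
def cx {n : ℕ} (M : Matrix (Fin n) (Fin n) ℝ) : Matrix (Fin n) (Fin n) ℂ := M.map (fun r => (r : ℂ))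

lemma cx_star {n : ℕ} (M : Matrix (Fin n) (Fin n) ℝ) : (cx M).map star = cx M := by
  ext i j; simp [cx]

lemma ev_zero {n : ℕ} (G : Matrix (Fin n) (Fin n) (RatFunc ℝ)) : ev 0 G = cx (evalR G 0) := by
  ext i j
  have := evalC_ofReal (G i j) 0
  simpa [ev, cx, evalR] using this

lemma ev_inf {n : ℕ} {G : Matrix (Fin n) (Fin n) (RatFunc ℝ)} (h : Proper G) :
    Tendsto (fun s => ev s G) (Bornology.cobounded ℂ) (𝓝 (cx (evalInf G))) := by
  have : Tendsto (fun s i j => ev s G i j) (Bornology.cobounded ℂ) (𝓝 (fun i j => cx (evalInf G) i j)) := by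
    rw [tendsto_pi_nhds]
    intro i
    rw [tendsto_pi_nhds]
    intro j
    exact evalC_tendsto_inf (h i j)
  exact this

lemma eventually_regM_cobounded {n : ℕ} (G : Matrix (Fin n) (Fin n) (RatFunc ℝ)) :
    ∀ᶠ s in Bornology.cobounded ℂ, RegM s G :=
  (eventually_cofinite_regM G).filter_mono (Bornology.le_cofinite ℂ)

lemma IsNI.im_nonpos {n : ℕ} {G : Matrix (Fin n) (Fin n) (RatFunc ℝ)} (hG : IsNI G) {ω : ℝ} (hω : 0 < ω)
    (hr : RegM (jw ω) G) (x : Fin n → ℂ) : (qf (ev (jw ω) G) x).im ≤ 0 := by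
  have h1 := hG.2.2.1 ω hω (regM_iff.1 hr)
  have h2 := (Complex.le_def.1 (h1.dotProduct_mulVec_nonneg x)).1
  have h3 := qf_niKer (ev (jw ω) G) x
  rw [evalM_eq_ev] at h2
  change (0 : ℝ) ≤ (qf (niKer (ev (jw ω) G)) x).re at h2
  linarith

lemma IsNI.im_nonneg {n : ℕ} {G : Matrix (Fin n) (Fin n) (RatFunc ℝ)} (hG : IsNI G) {ω : ℝ} (hω : ω < 0)
    (hr : RegM (jw ω) G) (x : Fin n → ℂ) : 0 ≤ (qf (ev (jw ω) G) x).im := by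
  have e : jw ω = star (jw (-ω)) := by rw [star_jw, neg_neg]
  rw [e, regM_star] at hr
  have := hG.im_nonpos (neg_pos.2 hω) hr (star x)
  rw [e, ev_star, qf_map_star]
  simpa using this

lemma IsSNI.isNI {n : ℕ} {G : Matrix (Fin n) (Fin n) (RatFunc ℝ)} (hG : IsSNI G) : IsNI G := by
  have hp : ∀ s : ℂ, 0 ≤ s.re → ¬ HasPole G s := by
    rintro s hs ⟨i, j, h⟩
    exact hG.1.2 s hs i j h
  refine ⟨hG.1.1, fun s hs => hp s hs.le, fun ω hω _ => (hG.2 ω hω).posSemidef, ?_, ?_⟩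
  · intro ω _ h
    exact absurd h (hp _ (jw_re ω).ge)
  · intro h
    exact absurd h (hp _ (by simp))

lemma IsSNI.im_neg {n : ℕ} {G : Matrix (Fin n) (Fin n) (RatFunc ℝ)} (hG : IsSNI G) {ω : ℝ} (hω : 0 < ω)
    (x : Fin n → ℂ) (hx : x ≠ 0) : (qf (ev (jw ω) G) x).im < 0 := by
  have h1 := hG.2 ω hω
  have h2 := (Complex.lt_def.1 (h1.dotProduct_mulVec_pos hx)).1
  have h3 := qf_niKer (ev (jw ω) G) x
  rw [evalM_eq_ev] at h2
  change (0 : ℝ) < (qf (niKer (ev (jw ω) G)) x).re at h2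
  linarith

lemma IsSNI.im_pos {n : ℕ} {G : Matrix (Fin n) (Fin n) (RatFunc ℝ)} (hG : IsSNI G) {ω : ℝ} (hω : ω < 0)
    (x : Fin n → ℂ) (hx : x ≠ 0) : 0 < (qf (ev (jw ω) G) x).im := by
  have e : jw ω = star (jw (-ω)) := by rw [star_jw, neg_neg]
  have := hG.im_neg (neg_pos.2 hω) (star x) (by simpa using hx)
  rw [e, ev_star, qf_map_star]
  simpa using this

lemma im_zero_of_real {n : ℕ} {M : Matrix (Fin n) (Fin n) ℝ} (h : ∀ x, (qf (cx M) x).im ≤ 0) (x : Fin n → ℂ) :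
    (qf (cx M) x).im = 0 := by
  refine le_antisymm (h x) ?_
  have h1 := h (star x)
  have h2 := qf_map_star (cx M) x
  rw [cx_star] at h2
  rw [h2]
  simpa using h1

lemma IsNI.im_inf {n : ℕ} {G : Matrix (Fin n) (Fin n) (RatFunc ℝ)} (hG : IsNI G) (x : Fin n → ℂ) :
    (qf (cx (evalInf G)) x).im = 0 := by
  refine im_zero_of_real (fun x => ?_) x
  have hj : Tendsto jw atTop (Bornology.cobounded ℂ) := jw_tendsto.mono_left atTop_le_cocompact
  have h1 : Tendsto (fun ω => (qf (ev (jw ω) G) x).im) atTop (𝓝 (qf (cx (evalInf G)) x).im) :=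
    (Complex.continuous_im.tendsto _).comp (((qf_continuous x).tendsto _).comp ((ev_inf hG.1).comp hj))
  refine le_of_tendsto h1 ?_
  filter_upwards [hj.eventually (eventually_regM_cobounded G), eventually_gt_atTop 0] with ω h2 h3
  exact hG.im_nonpos h3 h2 x

lemma IsNI.im_zero {n : ℕ} {G : Matrix (Fin n) (Fin n) (RatFunc ℝ)} (hG : IsNI G) (h0 : ¬ HasPole G 0)
    (x : Fin n → ℂ) : (qf (ev 0 G) x).im = 0 := by
  rw [ev_zero]
  refine im_zero_of_real (fun x => ?_) x
  rw [← ev_zero]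
  have hj : Tendsto jw (𝓝[>] 0) (𝓝[≠] 0) := by
    refine tendsto_nhdsWithin_iff.2 ⟨?_, ?_⟩
    · have := jw_cont.tendsto 0
      rw [show jw 0 = 0 by simp [jw]] at this
      exact this.mono_left nhdsWithin_le_nhds
    · filter_upwards [self_mem_nhdsWithin] with ω hω
      have : ω ≠ 0 := ne_of_gt hω
      simp [jw, this]
  have h1 : Tendsto (fun ω => (qf (ev (jw ω) G) x).im) (𝓝[>] 0) (𝓝 (qf (ev 0 G) x).im) :=
    (Complex.continuous_im.tendsto _).comp (((qf_continuous x).tendsto _).comp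
      ((ev_differentiableAt (regM_iff.2 h0)).continuousAt.tendsto.comp (hj.mono_right nhdsWithin_le_nhds)))
  refine le_of_tendsto h1 ?_
  filter_upwards [hj.eventually ((eventually_cofinite_regM G).filter_mono (punctured_le_cofinite 0)),
    self_mem_nhdsWithin] with ω h2 h3
  exact hG.im_nonpos h3 h2 x

end basicNI

section prlemma

lemma local_lower {g : ℂ → ℂ} {s0 : ℂ} (hs0 : s0.re = 0) {r : ℝ} (hr : 0 ≤ r)
    (hd : ∀ᶠ s in 𝓝[≠] s0, DifferentiableAt ℂ g s)
    (hl : Tendsto (fun s => (s - s0) * g s) (𝓝[≠] s0) (𝓝 (r : ℂ))) :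
    ∃ B : ℝ, ∀ᶠ s in 𝓝 s0, 0 < s.re → -B ≤ (g s).re := by
  classical
  set h : ℂ → ℂ := Function.update (fun s => (s - s0) * g s) s0 (r : ℂ) with hh
  have hne : ∀ s, s ≠ s0 → h =ᶠ[𝓝 s] fun s => (s - s0) * g s := by
    intro s hs
    filter_upwards [isOpen_ne.mem_nhds hs] with z hz
    exact Function.update_of_ne hz _ _
  have h1 : ∀ᶠ s in 𝓝[≠] s0, DifferentiableAt ℂ h s := by
    filter_upwards [hd, self_mem_nhdsWithin] with s hs hs'
    refine DifferentiableAt.congr_of_eventuallyEq ?_ (hne s hs')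
    fun_prop
  have h2 : ContinuousAt h s0 := continuousAt_update_same.2 hl
  have h3 := (Complex.analyticAt_of_differentiable_on_punctured_nhds_of_continuousAt h1 h2).differentiableAt
  obtain ⟨B, hB⟩ := h3.isBigO_sub.bound
  refine ⟨B, ?_⟩
  filter_upwards [hB] with s hs hre
  have hss : s ≠ s0 := by
    rintro rfl
    linarith
  have hsub : s - s0 ≠ 0 := sub_ne_zero.2 hss
  have e1 : h s = (s - s0) * g s := Function.update_of_ne hss _ _
  have e0 : h s0 = r := Function.update_self _ _ _
  rw [e1, e0] at hs
  have e2 : g s - r / (s - s0) = ((s - s0) * g s - r) / (s - s0) := by field_simp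
  have e3 : ‖g s - r / (s - s0)‖ ≤ B := by
    rw [e2, norm_div, div_le_iff₀ (norm_pos_iff.2 hsub)]
    exact hs
  have e4 := (Complex.abs_re_le_norm _).trans e3
  have e5 : 0 ≤ ((r : ℂ) / (s - s0)).re := by
    rw [div_eq_mul_inv, Complex.re_ofReal_mul, Complex.inv_re]
    refine mul_nonneg hr (div_nonneg ?_ (Complex.normSq_nonneg _))
    rw [Complex.sub_re, hs0]
    linarith
  rw [Complex.sub_re] at e4
  have := (abs_le.1 e4).1
  linarith

lemma poly_bound (D : ℂ[X]) : ∃ c : ℝ, ∀ s : ℂ, 0 ≤ s.re → ‖D.eval s‖ ≤ c * ‖s + 1‖ ^ D.natDegree := by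
  refine ⟨∑ i ∈ Finset.range (D.natDegree + 1), ‖D.coeff i‖, fun s hs => ?_⟩
  have h1 : 1 ≤ ‖s + 1‖ := by
    refine le_trans ?_ (Complex.re_le_norm _)
    simp; exact hs
  have h2 : ‖s‖ ≤ ‖s + 1‖ := by
    rw [← sq_le_sq₀ (norm_nonneg _) (norm_nonneg _), ← Complex.normSq_eq_norm_sq, ← Complex.normSq_eq_norm_sq,
      Complex.normSq_apply, Complex.normSq_apply]
    simp
    nlinarith
  rw [eval_eq_sum_range, Finset.sum_mul]
  refine (norm_sum_le _ _).trans (Finset.sum_le_sum fun i hi => ?_)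
  rw [norm_mul, norm_pow]
  have h3 : i ≤ D.natDegree := Nat.lt_succ_iff.1 (Finset.mem_range.1 hi)
  have : ‖s‖ ^ i ≤ ‖s + 1‖ ^ D.natDegree :=
    (pow_le_pow_left₀ (norm_nonneg _) h2 i).trans (pow_le_pow_right₀ h1 h3)
  gcongr

lemma pr_abstract {g : ℂ → ℂ} {D : ℂ[X]} (hD0 : D ≠ 0)
    (hDo : ∀ s : ℂ, 0 < s.re → D.eval s ≠ 0)
    (hg : ∀ s : ℂ, D.eval s ≠ 0 → DifferentiableAt ℂ g s)
    (hax : ∀ s : ℂ, s.re = 0 → D.eval s ≠ 0 → 0 ≤ (g s).re)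
    (hres : ∀ s0 : ℂ, s0.re = 0 → ∃ r : ℝ, 0 ≤ r ∧
      Tendsto (fun s => (s - s0) * g s) (𝓝[≠] s0) (𝓝 (r : ℂ)))
    (hinf : Tendsto g (Bornology.cobounded ℂ) (𝓝 0)) :
    ∀ s : ℂ, 0 < s.re → 0 ≤ (g s).re := by
  have hcl : closure {z : ℂ | 0 < z.re} = {z | 0 ≤ z.re} := Complex.closure_setOfPred_lt_re 0
  -- lower bound
  have hlow : ∃ B : ℝ, 0 ≤ B ∧ ∀ s : ℂ, 0 ≤ s.re → D.eval s ≠ 0 → -B ≤ (g s).re := by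
    have hR : ∃ R : ℝ, ∀ s : ℂ, R ≤ ‖s‖ → ‖g s‖ < 1 := by
      have h1 := hinf.eventually (Metric.ball_mem_nhds 0 one_pos)
      obtain ⟨R, -, h2⟩ := (Filter.hasBasis_cobounded_norm).eventually_iff.1 h1
      exact ⟨R, fun s hs => by simpa using h2 hs⟩
    obtain ⟨R, hR⟩ := hR
    have hK : IsCompact (Metric.closedBall (0 : ℂ) R ∩ {z | 0 ≤ z.re}) :=
      (isCompact_closedBall _ _).inter_right (isClosed_le continuous_const Complex.continuous_re)
    have hind : ∃ B : ℝ, ∀ s ∈ (Metric.closedBall (0 : ℂ) R ∩ {z | 0 ≤ z.re}), 0 < s.re → -B ≤ (g s).re := by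
      refine hK.induction_on (p := fun T => ∃ B : ℝ, ∀ s ∈ T, 0 < s.re → -B ≤ (g s).re) ?_ ?_ ?_ ?_
      · exact ⟨0, by simp⟩
      · rintro s t hst ⟨B, hB⟩
        exact ⟨B, fun z hz => hB z (hst hz)⟩
      · rintro s t ⟨B, hB⟩ ⟨B', hB'⟩
        refine ⟨max B B', fun z hz hz' => ?_⟩
        have m1 := le_max_left B B'
        have m2 := le_max_right B B'
        rcases hz with hz | hz
        · linarith [hB z hz hz']
        · linarith [hB' z hz hz']
      · rintro s ⟨-, hs⟩
        have : ∃ B : ℝ, ∀ᶠ z in 𝓝 s, 0 < z.re → -B ≤ (g z).re := by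
          rcases (show 0 ≤ s.re from hs).eq_or_lt with h0 | h0
          · obtain ⟨r, hr, hl⟩ := hres s h0.symm
            refine local_lower h0.symm hr ?_ hl
            filter_upwards [(Polynomial.eventually_cofinite_not_isRoot hD0).filter_mono
              (punctured_le_cofinite s)] with z hz
            exact hg z hz
          · refine ⟨-((g s).re - 1), ?_⟩
            have hc : ContinuousAt (fun z => (g z).re) s :=
              Complex.continuous_re.continuousAt.comp (hg s (hDo s h0)).continuousAt
            filter_upwards [hc.eventually (lt_mem_nhds (show (g s).re - 1 < (g s).re by linarith))] with z hz _
            linarith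
        obtain ⟨B, hB⟩ := this
        exact ⟨_, mem_nhdsWithin_of_mem_nhds hB, B, fun z hz => hz⟩
    obtain ⟨B, hB⟩ := hind
    refine ⟨max 1 B, by positivity, fun s hs hDs => ?_⟩
    have m1 := le_max_left 1 B
    have m2 := le_max_right 1 B
    rcases hs.eq_or_lt with h0 | h0
    · linarith [hax s h0.symm hDs]
    · rcases le_total R ‖s‖ with h1 | h1
      · have := (abs_le.1 ((Complex.abs_re_le_norm _).trans (hR s h1).le)).1
        linarith
      · have := hB s ⟨by simpa using h1, hs⟩ h0
        linarith
  obtain ⟨B, hB0, hB⟩ := hlow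
  obtain ⟨c, hc⟩ := poly_bound D
  set Bf : ℂ → ℂ := fun s => D.eval s / (s + 1) ^ D.natDegree with hBf
  have hs1 : ∀ s : ℂ, 0 ≤ s.re → s + 1 ≠ 0 := by
    intro s hs h
    have := congrArg Complex.re h
    simp at this
    linarith
  have hBd : ∀ s : ℂ, 0 ≤ s.re → DifferentiableAt ℂ Bf s := by
    intro s hs
    have := pow_ne_zero D.natDegree (hs1 s hs)
    exact (D.differentiable s).div (by fun_prop) this
  have hBc : ∀ s : ℂ, 0 ≤ s.re → ‖Bf s‖ ≤ c := by
    intro s hs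
    have h1 : 0 < ‖s + 1‖ ^ D.natDegree := pow_pos (norm_pos_iff.2 (hs1 s hs)) _
    rw [hBf]
    simp only
    rw [norm_div, norm_pow, div_le_iff₀ h1]
    exact hc s hs
  have hc0 : 0 ≤ c := (norm_nonneg _).trans (hBc 0 (by simp))
  have key : ∀ m : ℕ, ∀ s : ℂ, 0 ≤ s.re → ‖Bf s * Complex.exp (-(m : ℂ) * g s)‖ ≤ c := by
    intro m s hs
    have hnorm : ∀ s, ‖Complex.exp (-(m : ℂ) * g s)‖ = Real.exp (-(m * (g s).re)) := by
      intro s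
      rw [Complex.norm_exp]
      simp
    have hbd : ∀ s : ℂ, 0 ≤ s.re → ‖Bf s * Complex.exp (-(m : ℂ) * g s)‖ ≤ ‖Bf s‖ * Real.exp (m * B) := by
      intro s hs
      rw [norm_mul, hnorm]
      by_cases h0 : D.eval s = 0
      · simp [hBf, h0]
      · have := mul_le_mul_of_nonneg_left (hB s hs h0) (Nat.cast_nonneg (α := ℝ) m)
        gcongr
        linarith
    have hdiff : ∀ s : ℂ, 0 ≤ s.re → D.eval s ≠ 0 →
        DifferentiableAt ℂ (fun s => Bf s * Complex.exp (-(m : ℂ) * g s)) s := by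
      intro s hs h0
      exact (hBd s hs).mul (((hg s h0).const_mul (-(m : ℂ))).cexp)
    refine PhragmenLindelof.right_half_plane_of_bounded_on_real
      (f := fun s => Bf s * Complex.exp (-(m : ℂ) * g s)) ?_ ⟨1, by norm_num, 0, ?_⟩ ?_ ?_ hs
    · constructor
      · exact fun z hz => (hdiff z (le_of_lt hz) (hDo z hz)).differentiableWithinAt
      · rw [hcl]
        intro z hz
        by_cases h0 : D.eval z = 0
        · have e : Bf z * Complex.exp (-(m : ℂ) * g z) = 0 := by simp [hBf, h0]
          have eB : Bf z = 0 := by simp [hBf, h0]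
          rw [ContinuousWithinAt, e]
          have h2 : Tendsto (fun s => ‖Bf s‖ * Real.exp (m * B)) (𝓝[{z | 0 ≤ z.re}] z) (𝓝 0) := by
            have := ((hBd z hz).continuousAt.norm.mul_const (Real.exp (m * B))).tendsto
            rw [eB, norm_zero, zero_mul] at this
            exact this.mono_left nhdsWithin_le_nhds
          refine squeeze_zero_norm' ?_ h2
          filter_upwards [self_mem_nhdsWithin] with w hw
          exact hbd w hw
        · exact (hdiff z hz h0).continuousAt.continuousWithinAt
    · refine Asymptotics.IsBigO.of_bound (c * Real.exp (m * B)) ?_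
      rw [eventually_inf_principal]
      refine Eventually.of_forall fun z hz => ?_
      have h1 := hBc z (le_of_lt hz)
      refine (hbd z (le_of_lt hz)).trans ?_
      simp only [zero_mul, Real.exp_zero, norm_one, mul_one]
      gcongr
    · refine ⟨c * Real.exp (m * B), ?_⟩
      rw [eventually_map]
      filter_upwards [eventually_ge_atTop 0] with x hx
      have h0 : 0 ≤ (x : ℂ).re := by simpa using hx
      have h1 := hBc x h0
      refine (hbd x h0).trans ?_
      gcongr
    · intro x
      set w : ℂ := x * Complex.I with hw
      have hre : w.re = 0 := by simp [hw]
      by_cases h0 : D.eval w = 0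
      · simp [hBf, h0, hc0]
      · rw [norm_mul, hnorm]
        have h1 := hax w hre h0
        have h2 : Real.exp (-(m * (g w).re)) ≤ 1 := by
          rw [Real.exp_le_one_iff]
          have := mul_nonneg (Nat.cast_nonneg (α := ℝ) m) h1
          linarith
        have h3 := hBc w hre.ge
        calc _ ≤ ‖Bf w‖ * 1 := by gcongr
          _ ≤ c := by linarith
  intro s hs
  by_contra hneg
  push Not at hneg
  have hBs : 0 < ‖Bf s‖ := by
    rw [norm_pos_iff]
    exact div_ne_zero (hDo s hs) (pow_ne_zero _ (hs1 s hs.le))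
  obtain ⟨m, hm⟩ := exists_nat_gt (c / ‖Bf s‖ / (-(g s).re))
  have h1 := key m s hs.le
  rw [norm_mul, Complex.norm_exp] at h1
  have h2 : (-(m : ℂ) * g s).re = m * (-(g s).re) := by simp
  rw [h2] at h1
  rw [div_lt_iff₀ (by linarith), div_lt_iff₀ hBs] at hm
  have h3 := Real.add_one_le_exp (m * (-(g s).re))
  have h4 := mul_le_mul_of_nonneg_left h3 hBs.le
  linarith

end prlemma

section prNI
open scoped Matrix.Norms.Operator

/-- the positive real function attached to `G` and `x` -/
def gfun {n : ℕ} (G : Matrix (Fin n) (Fin n) (RatFunc ℝ)) (x : Fin n → ℂ) (s : ℂ) : ℂ :=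
  qf (ev 0 G - ev s G) x / s

lemma gfun_star {n : ℕ} (G : Matrix (Fin n) (Fin n) (RatFunc ℝ)) (x : Fin n → ℂ) (s : ℂ) :
    gfun G x (star s) = star (gfun G (star x) s) := by
  have h0 : ev 0 G = (ev 0 G).map star := by
    have := ev_star G 0
    rwa [star_zero] at this
  rw [gfun, gfun, qf_sub, qf_sub, ev_star, qf_map_star]
  nth_rewrite 1 [h0]
  rw [qf_map_star]
  simp

lemma ne_zero_of_im {s : ℂ} (hs : s.re = 0) : s = jw s.im := by
  apply Complex.ext
  · rw [jw_re, hs]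
  · rw [jw_im]

lemma div_jw_re (a : ℂ) (ω : ℝ) : (a / jw ω).re = a.im / ω := by
  by_cases h : ω = 0
  · simp [h, jw]
  · have h1 : (ω : ℂ) ≠ 0 := by exact_mod_cast h
    have : a / jw ω = (-Complex.I * a) / (ω : ℂ) := by
      rw [jw, div_eq_div_iff (mul_ne_zero Complex.I_ne_zero h1) h1]
      linear_combination (a * ω) * Complex.I_mul_I
    rw [this, Complex.div_ofReal_re]
    simp

lemma qf_ev_continuousAt {n : ℕ} {G : Matrix (Fin n) (Fin n) (RatFunc ℝ)} {s : ℂ} (h : RegM s G)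
    (M : Matrix (Fin n) (Fin n) ℂ) (x : Fin n → ℂ) :
    DifferentiableAt ℂ (fun s => qf (M - ev s G) x) s := by
  simp only [qf, dotProduct, mulVec, ev, Matrix.sub_apply, Matrix.map_apply]
  have := fun i j => evalC_differentiableAt (h i j)
  fun_prop

lemma residue_pos {n : ℕ} {G : Matrix (Fin n) (Fin n) (RatFunc ℝ)} (hG : IsNI G) {ω : ℝ} (hω : 0 < ω)
    (hp : HasPole G (jw ω)) (x : Fin n → ℂ) :
    ∃ r : ℝ, 0 ≤ r ∧ Tendsto (fun s => (s - jw ω) * gfun G x s) (𝓝[≠] (jw ω)) (𝓝 (r : ℂ)) := by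
  obtain ⟨R, hR, hl⟩ := hG.2.2.2.1 ω hω hp
  have h1 := hR.dotProduct_mulVec_nonneg x
  change (0 : ℂ) ≤ qf R x at h1
  obtain ⟨h2, h3⟩ := Complex.le_def.1 h1
  refine ⟨(qf R x).re / ω, div_nonneg h2 hω.le, ?_⟩
  have hω' : (ω : ℂ) ≠ 0 := by exact_mod_cast hω.ne'
  have hj : jw ω ≠ 0 := mul_ne_zero Complex.I_ne_zero hω'
  have hid : Tendsto (fun s : ℂ => s) (𝓝[≠] (jw ω)) (𝓝 (jw ω)) := tendsto_id.mono_left nhdsWithin_le_nhds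
  have h4 : Tendsto (fun s : ℂ => qf ((s - jw ω) • Complex.I • evalM G s) x) (𝓝[≠] (jw ω)) (𝓝 (qf R x)) :=
    ((qf_continuous x).tendsto R).comp hl
  have h5 : Tendsto (fun s : ℂ => ((s - jw ω) * qf (ev 0 G) x + Complex.I *
      qf ((s - jw ω) • Complex.I • evalM G s) x) / s) (𝓝[≠] (jw ω))
      (𝓝 (((jw ω - jw ω) * qf (ev 0 G) x + Complex.I * qf R x) / jw ω)) :=
    (((hid.sub_const _).mul_const _).add (h4.const_mul _)).div hid hj
  have e : ((jw ω - jw ω) * qf (ev 0 G) x + Complex.I * qf R x) / jw ω = (((qf R x).re / ω : ℝ) : ℂ) := by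
    have : qf R x = ((qf R x).re : ℂ) := Complex.ext (by simp) (by simpa using h3.symm)
    rw [this, jw]
    have := Complex.I_ne_zero
    push_cast
    simp
    field_simp
  rw [e] at h5
  refine h5.congr fun s => ?_
  rw [gfun, evalM_eq_ev, qf_smul, qf_smul, qf_sub]
  linear_combination ((s - jw ω) * qf (ev s G) x / s) * Complex.I_mul_I

lemma pr_NI {n : ℕ} {G : Matrix (Fin n) (Fin n) (RatFunc ℝ)} (hG : IsNI G) (h0 : ¬ HasPole G 0)
    (x : Fin n → ℂ) (s : ℂ) (hs : 0 < s.re) : 0 ≤ (gfun G x s).re := by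
  set D : ℂ[X] := X * ∏ i, ∏ j, (G i j).denom.map (algebraMap ℝ ℂ) with hD
  have hDe : ∀ s : ℂ, D.eval s ≠ 0 ↔ s ≠ 0 ∧ RegM s G := by
    intro s
    rw [hD, eval_mul, eval_X, eval_prod, mul_ne_zero_iff, Finset.prod_ne_zero_iff]
    simp only [eval_prod, Finset.prod_ne_zero_iff, RegM, mem_reg, isPoleAt_iff]
    simp
  refine pr_abstract (g := gfun G x) (D := D) ?_ ?_ ?_ ?_ ?_ ?_ s hs
  · rw [hD, mul_ne_zero_iff, Finset.prod_ne_zero_iff]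
    refine ⟨X_ne_zero, fun i _ => ?_⟩
    rw [Finset.prod_ne_zero_iff]
    exact fun j _ => denom_map_ne_zero _
  · intro s hs
    rw [hDe]
    refine ⟨?_, regM_iff.2 (hG.2.1 s hs)⟩
    rintro rfl
    simp at hs
  · intro s hs
    obtain ⟨h1, h2⟩ := (hDe s).1 hs
    exact (qf_ev_continuousAt h2 _ x).div differentiableAt_id h1
  · intro s hs hDs
    obtain ⟨h1, h2⟩ := (hDe s).1 hDs
    rw [ne_zero_of_im hs] at h1 h2 ⊢
    set ω := s.im
    rw [gfun, div_jw_re, qf_sub, Complex.sub_im, hG.im_zero h0, zero_sub]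
    rcases lt_trichotomy ω 0 with h | h | h
    · exact div_nonneg_of_nonpos (neg_nonpos.2 (hG.im_nonneg h h2 x)) h.le
    · rw [h, div_zero]
    · exact div_nonneg (neg_nonneg.2 (hG.im_nonpos h h2 x)) h.le
  · intro s0 hs0
    by_cases hz : s0 = 0
    · subst hz
      refine ⟨0, le_rfl, ?_⟩
      have h1 := ((qf_ev_continuousAt (regM_iff.2 h0) (ev 0 G) x).continuousAt.tendsto).mono_left
        (nhdsWithin_le_nhds (s := {0}ᶜ))
      have e : qf (ev 0 G - ev 0 G) x = 0 := by rw [qf_sub, sub_self]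
      rw [e] at h1
      rw [Complex.ofReal_zero]
      refine h1.congr' ?_
      filter_upwards [self_mem_nhdsWithin] with s hs
      have hs' : s ≠ 0 := hs
      rw [gfun]
      field_simp
      simp
    by_cases hr : RegM s0 G
    · refine ⟨0, le_rfl, ?_⟩
      have h1 : DifferentiableAt ℂ (fun s => (s - s0) * gfun G x s) s0 :=
        (differentiableAt_id.sub_const s0).mul ((qf_ev_continuousAt hr (ev 0 G) x).div differentiableAt_id hz)
      have h2 := h1.continuousAt.tendsto.mono_left (nhdsWithin_le_nhds (s := {s0}ᶜ))
      simpa using h2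
    have hp : HasPole G s0 := by
      by_contra h
      exact hr (regM_iff.2 h)
    rcases lt_trichotomy s0.im 0 with h | h | h
    · have hp' : HasPole G (jw (-s0.im)) := by
        by_contra h
        apply hr
        rw [ne_zero_of_im hs0, ← regM_star, star_jw]
        exact regM_iff.2 h
      obtain ⟨r, hr0, hl⟩ := residue_pos hG (neg_pos.2 h) hp' (star x)
      refine ⟨r, hr0, ?_⟩
      have hst : jw (-s0.im) = star s0 := by rw [← star_jw, ← ne_zero_of_im hs0]
      rw [hst] at hl
      have ht : Tendsto (fun s : ℂ => star s) (𝓝[≠] s0) (𝓝[≠] (star s0)) := by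
        refine tendsto_nhdsWithin_iff.2 ⟨(continuous_star.tendsto s0).mono_left nhdsWithin_le_nhds, ?_⟩
        filter_upwards [self_mem_nhdsWithin] with s hs h
        exact hs (star_injective h)
      have h6 := (continuous_star.tendsto (r : ℂ)).comp (hl.comp ht)
      have e : star (r : ℂ) = r := by simp
      rw [e] at h6
      refine h6.congr fun s => ?_
      simp only [Function.comp]
      rw [gfun_star]
      simp
    · exact absurd (Complex.ext hs0 h) hz
    · rw [ne_zero_of_im hs0] at hp
      have := residue_pos hG h hp x
      rwa [← ne_zero_of_im hs0] at this
  · have h1 := ((qf_continuous x).tendsto _).comp ((tendsto_const_nhds (x := ev 0 G)).sub (ev_inf hG.1))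
    have h2 := h1.mul tendsto_inv₀_cobounded
    rw [mul_zero] at h2
    exact h2

lemma pr_inf {n : ℕ} {G : Matrix (Fin n) (Fin n) (RatFunc ℝ)} (hG : IsNI G) (h0 : ¬ HasPole G 0)
    (x : Fin n → ℂ) : 0 ≤ (qf (ev 0 G - cx (evalInf G)) x).re := by
  have hj : Tendsto (fun t : ℝ => (t : ℂ)) atTop (Bornology.cobounded ℂ) := by
    rw [← tendsto_norm_atTop_iff_cobounded]
    have : (fun x : ℝ => ‖(x : ℂ)‖) = fun x : ℝ => |x| := by
      funext x; simp
    rw [this]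
    exact tendsto_abs_atTop_atTop
  have h1 : Tendsto (fun t : ℝ => (qf (ev 0 G - ev (t : ℂ) G) x).re) atTop
      (𝓝 (qf (ev 0 G - cx (evalInf G)) x).re) :=
    (Complex.continuous_re.tendsto _).comp (((qf_continuous x).tendsto _).comp
      ((tendsto_const_nhds (x := ev 0 G)).sub ((ev_inf hG.1).comp hj)))
  refine ge_of_tendsto h1 ?_
  filter_upwards [eventually_gt_atTop 0] with t ht
  have h2 := pr_NI hG h0 x t (by simpa using ht)
  rw [gfun, Complex.div_ofReal_re] at h2
  have h3 := mul_nonneg h2 ht.le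
  rwa [div_mul_cancel₀ _ ht.ne'] at h3

end prNI

section mainLB
open scoped Matrix.Norms.Operator

lemma ev_bounded {n : ℕ} {G : Matrix (Fin n) (Fin n) (RatFunc ℝ)} (hG : Proper G) {a : ℝ}
    (h : ∀ s : ℂ, a ≤ s.re → RegM s G) : ∃ B : ℝ, ∀ s : ℂ, a ≤ s.re → ‖ev s G‖ ≤ B := by
  have h1 := ((ev_inf hG).norm).eventually (gt_mem_nhds (show ‖cx (evalInf G)‖ < ‖cx (evalInf G)‖ + 1 by linarith))
  obtain ⟨R, -, h2⟩ := (Filter.hasBasis_cobounded_norm).eventually_iff.1 h1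
  have hK : IsCompact (Metric.closedBall (0 : ℂ) R ∩ {z | a ≤ z.re}) :=
    (isCompact_closedBall _ _).inter_right (isClosed_le continuous_const Complex.continuous_re)
  obtain ⟨B, hB⟩ := hK.exists_bound_of_continuousOn (f := fun s => ev s G) (fun s hs =>
    (ev_differentiableAt (h s hs.2)).continuousAt.continuousWithinAt)
  refine ⟨max B (‖cx (evalInf G)‖ + 1), fun s hs => ?_⟩
  rcases le_total R ‖s‖ with h3 | h3
  · exact (le_of_lt (h2 h3)).trans (le_max_right _ _)
  · exact (hB s ⟨by simpa using h3, hs⟩).trans (le_max_left _ _)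

/-- regularised plant -/
def Pd {n : ℕ} (P : Matrix (Fin n) (Fin n) (RatFunc ℝ)) (δ : ℝ) (s : ℂ) : Matrix (Fin n) (Fin n) ℂ :=
  ev 0 P - (s / (s + δ)) • (ev 0 P - ev (s + δ) P)

lemma add_ne {δ : ℝ} (hδ : 0 < δ) {s : ℂ} (hs : 0 ≤ s.re) : s + (δ : ℂ) ≠ 0 := by
  intro h
  have := congrArg Complex.re h
  simp at this
  linarith

lemma frac_le {δ : ℝ} (hδ : 0 < δ) {s : ℂ} (hs : 0 ≤ s.re) : ‖s‖ ≤ ‖s + (δ : ℂ)‖ := by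
  rw [← sq_le_sq₀ (norm_nonneg _) (norm_nonneg _), ← Complex.normSq_eq_norm_sq, ← Complex.normSq_eq_norm_sq,
      Complex.normSq_apply, Complex.normSq_apply]
  simp
  nlinarith

lemma frac_le' {δ : ℝ} (hδ : 0 < δ) {s : ℂ} (hs : 0 ≤ s.re) : ‖s / (s + (δ : ℂ))‖ ≤ 1 := by
  rw [norm_div]
  exact div_le_one_of_le₀ (frac_le hδ hs) (norm_nonneg _)

lemma Pd_im {n : ℕ} {P : Matrix (Fin n) (Fin n) (RatFunc ℝ)} (hP : IsNI P) (hP0 : ¬ HasPole P 0)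
    (δ ω : ℝ) (x : Fin n → ℂ) :
    (qf (Pd P δ (jw ω)) x).im = - ω * (gfun P x (jw ω + δ)).re := by
  rw [Pd, qf_sub, qf_smul, Complex.sub_im, hP.im_zero hP0]
  have : jw ω / (jw ω + δ) * qf (ev 0 P - ev (jw ω + δ) P) x = jw ω * gfun P x (jw ω + δ) := by
    rw [gfun]; ring
  rw [this, Complex.mul_im, jw_re, jw_im]
  ring

lemma main_LB {n : ℕ} {P C : Matrix (Fin n) (Fin n) (RatFunc ℝ)} (hP : IsNI P) (hP0 : ¬ HasPole P 0)
    (hC : IsSNI C)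
    (h0 : ∀ τ ∈ Set.Icc (0 : ℝ) 1, (Lb ((τ : ℂ) • ev 0 P) (ev 0 C)).det ≠ 0)
    (hi : ∀ τ ∈ Set.Icc (0 : ℝ) 1, (Lb ((τ : ℂ) • cx (evalInf P)) (cx (evalInf C))).det ≠ 0) :
    ∃ κ > 0, ∀ τ ∈ Set.Icc (0 : ℝ) 1, ∀ s : ℂ, 0 < s.re → LB κ (Lb ((τ : ℂ) • ev s P) (ev s C)) := by
  have hjw0 : jw 0 = 0 := by simp [jw]
  have rC : ∀ s : ℂ, 0 ≤ s.re → RegM s C := fun s hs i j => hC.1.2 s hs i j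
  have rP : ∀ s : ℂ, 0 < s.re → RegM s P := fun s hs => regM_iff.2 (hP.2.1 s hs)
  have cCj : Continuous fun ω => ev (jw ω) C := by
    refine continuous_iff_continuousAt.2 fun ω => ?_
    exact ContinuousAt.comp (f := jw) (g := fun s => ev s C)
      (ev_differentiableAt (rC (jw ω) (jw_re ω).ge)).continuousAt jw_cont.continuousAt
  obtain ⟨e, he, hax⟩ := axis_bound (Cf := fun ω => ev (jw ω) C) (X0 := ev 0 P) (Xi := cx (evalInf P))
    (Yi := cx (evalInf C)) cCj ((ev_inf hC.1.1).comp jw_tendsto)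
    (fun ω hω x hx => hC.im_neg hω x hx) (fun ω hω x hx => hC.im_pos hω x hx)
    (by rw [hjw0]; exact h0) hi
  obtain ⟨d, hd, md⟩ := Metric.continuousAt_iff.1
    (ev_differentiableAt (regM_iff.2 hP0)).continuousAt e he
  have hR : ∃ R : ℝ, ∀ s : ℂ, R ≤ ‖s‖ → ‖ev s P - cx (evalInf P)‖ < e / 2 := by
    have h1 := (ev_inf hP.1).eventually (Metric.ball_mem_nhds _ (half_pos he))
    obtain ⟨R, -, h2⟩ := (Filter.hasBasis_cobounded_norm).eventually_iff.1 h1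
    refine ⟨R, fun s hs => ?_⟩
    have := h2 hs
    rwa [dist_eq_norm] at this
  obtain ⟨R, hR⟩ := hR
  set r : ℝ := min e (min (d / 2) (1 / (|R| + 1))) with hr
  have hr0 : 0 < r := lt_min he (lt_min (half_pos hd) (by positivity))
  have hrR : |R| + 1 ≤ 1 / r := by
    have h3 : r ≤ 1 / (|R| + 1) := (min_le_right _ _).trans (min_le_right _ _)
    rw [le_div_iff₀ hr0]
    rw [le_div_iff₀ (by positivity)] at h3
    linarith
  have hrd : r ≤ d / 2 := (min_le_right _ _).trans (min_le_left _ _)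
  obtain ⟨κ, hκ, hLB⟩ := hax r hr0 (min_le_left _ _)
  refine ⟨κ, hκ, ?_⟩
  set M := ‖ev 0 P - cx (evalInf P)‖ with hM
  have hev : ∀ᶠ δ : ℝ in 𝓝[>] 0, 0 < δ ∧ δ < r ∧ δ * r * M < e / 2 := by
    have h1 : Tendsto (fun δ : ℝ => δ * r * M) (𝓝[>] 0) (𝓝 0) := by
      have : Continuous (fun δ : ℝ => δ * r * M) := by fun_prop
      have := (this.tendsto 0).mono_left (nhdsWithin_le_nhds (s := Set.Ioi 0))
      simpa using this
    have h2 : Tendsto (fun δ : ℝ => δ) (𝓝[>] 0) (𝓝 0) := tendsto_id.mono_left nhdsWithin_le_nhds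
    filter_upwards [self_mem_nhdsWithin, h2.eventually (gt_mem_nhds hr0),
      h1.eventually (gt_mem_nhds (half_pos he))] with δ a b c
    exact ⟨a, b, c⟩
  obtain ⟨BC, hBC⟩ := ev_bounded hC.1.1 rC
  have hδ : ∀ δ : ℝ, 0 < δ → δ < r → δ * r * M < e / 2 →
      ∀ s : ℂ, 0 ≤ s.re → ∀ τ ∈ Set.Icc (0 : ℝ) 1, LB κ (Lb ((τ : ℂ) • Pd P δ s) (ev s C)) := by
    intro δ hδ0 hδr hδM
    have rPd : ∀ s : ℂ, δ ≤ s.re → RegM s P := fun s hs => rP s (hδ0.trans_le hs)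
    obtain ⟨BP, hBP⟩ := ev_bounded hP.1 rPd
    have hre : ∀ s : ℂ, 0 ≤ s.re → δ ≤ (s + (δ : ℂ)).re := by
      intro s hs; simp; exact hs
    refine propagate (Pf := Pd P δ) (Cf := fun s => ev s C)
      (B := max BC (‖ev 0 P‖ + (‖ev 0 P‖ + BP))) ?_ ?_ ?_ ?_ hκ ?_
    · refine diffContOnCl_of fun s hs => ?_
      have h1 : DifferentiableAt ℂ (fun s : ℂ => ev (s + (δ : ℂ)) P) s :=
        DifferentiableAt.comp (g := fun s => ev s P) (f := fun s : ℂ => s + (δ : ℂ)) s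
          (ev_differentiableAt (rPd _ (hre s hs))) (by fun_prop)
      have h2 : DifferentiableAt ℂ (fun s : ℂ => s / (s + (δ : ℂ))) s :=
        differentiableAt_id.div (by fun_prop) (add_ne hδ0 hs)
      exact (h2.smul (h1.const_sub (ev 0 P))).const_sub (ev 0 P)
    · exact diffContOnCl_of fun s hs => ev_differentiableAt (rC s hs)
    · intro s hs
      refine le_trans ?_ (le_max_right _ _)
      refine (norm_sub_le _ _).trans ?_
      rw [norm_smul]
      have h1 := norm_sub_le (ev 0 P) (ev (s + (δ : ℂ)) P)
      have h2 := hBP _ (hre s hs)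
      have h3 := mul_le_mul_of_nonneg_right (frac_le' hδ0 hs) (norm_nonneg (ev 0 P - ev (s + (δ : ℂ)) P))
      linarith
    · intro s hs
      exact (hBC s hs).trans (le_max_left _ _)
    · intro ω τ hτ
      have hj := (jw_re ω).ge
      have hf := frac_le' hδ0 hj
      have hnj : ‖jw ω‖ = |ω| := by simp [jw]
      refine hLB ω τ (Pd P δ (jw ω)) hτ ?_ ?_ ?_ ?_
      · intro hω
        have h1 : dist (jw ω + (δ : ℂ)) 0 < d := by
          rw [dist_zero_right]
          refine (norm_add_le _ _).trans_lt ?_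
          rw [hnj, Complex.norm_real, Real.norm_eq_abs, abs_of_pos hδ0]
          linarith
        have h2 := md h1
        rw [dist_eq_norm] at h2
        have h3 : Pd P δ (jw ω) - ev 0 P = - ((jw ω / (jw ω + δ)) • (ev 0 P - ev (jw ω + δ) P)) := by
          rw [Pd]; abel
        rw [h3, norm_neg, norm_smul, norm_sub_rev]
        have h4 := mul_le_mul_of_nonneg_right hf (norm_nonneg (ev (jw ω + (δ : ℂ)) P - ev 0 P))
        linarith
      · intro hω
        have hn := frac_le hδ0 hj
        rw [hnj] at hn
        have h1 := hR (jw ω + δ) (by linarith [le_abs_self R])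
        have hne := add_ne hδ0 hj
        have h3 : Pd P δ (jw ω) - cx (evalInf P) = ((δ : ℂ) / (jw ω + δ)) • (ev 0 P - cx (evalInf P)) +
            (jw ω / (jw ω + δ)) • (ev (jw ω + δ) P - cx (evalInf P)) := by
          have h4 : (δ : ℂ) / (jw ω + δ) = 1 - jw ω / (jw ω + δ) := by field_simp; ring
          rw [h4, Pd]
          module
        rw [h3]
        refine (norm_add_le _ _).trans_lt ?_
        rw [norm_smul, norm_smul]
        have h4 := mul_le_mul_of_nonneg_right hf (norm_nonneg (ev (jw ω + (δ : ℂ)) P - cx (evalInf P)))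
        have h5 : ‖(δ : ℂ) / (jw ω + δ)‖ ≤ δ * r := by
          rw [norm_div, Complex.norm_real, Real.norm_eq_abs, abs_of_pos hδ0,
            div_le_iff₀ (norm_pos_iff.2 hne)]
          have h6 : 1 ≤ r * ‖jw ω + (δ : ℂ)‖ := by
            rw [div_lt_iff₀ hr0] at hω
            have := mul_le_mul_of_nonneg_left hn hr0.le
            linarith
          have := mul_le_mul_of_nonneg_left h6 hδ0.le
          linarith
        have h7 := mul_le_mul_of_nonneg_right h5 (norm_nonneg (ev 0 P - cx (evalInf P)))
        rw [← hM] at h7 ⊢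
        linarith
      · intro hω x
        have h1 := Pd_im hP hP0 δ ω x
        have h2 := pr_NI hP hP0 x (jw ω + δ) (hδ0.trans_le (hre _ hj))
        change (qf (Pd P δ (jw ω)) x).im ≤ 0
        have := mul_nonneg hω.le h2
        linarith
      · intro hω x
        have h1 := Pd_im hP hP0 δ ω x
        have h2 := pr_NI hP hP0 x (jw ω + δ) (hδ0.trans_le (hre _ hj))
        change 0 ≤ (qf (Pd P δ (jw ω)) x).im
        have := mul_nonneg (neg_nonneg.2 hω.le) h2
        linarith
  intro τ hτ s hs z
  have hs0 : s ≠ 0 := by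
    rintro rfl
    simp at hs
  have hlim : Tendsto (fun δ : ℝ => Pd P δ s) (𝓝[>] 0) (𝓝 (ev s P)) := by
    have h1 : ContinuousAt (fun δ : ℝ => ev (s + (δ : ℂ)) P) 0 := by
      refine ContinuousAt.comp (g := fun s => ev s P) (f := fun δ : ℝ => s + (δ : ℂ)) ?_ (by fun_prop)
      refine (ev_differentiableAt ?_).continuousAt
      simpa using rP s hs
    have h2 : ContinuousAt (fun δ : ℝ => s / (s + (δ : ℂ))) 0 := by
      refine ContinuousAt.div continuousAt_const (by fun_prop) ?_
      simpa using hs0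
    have h3 : ContinuousAt (fun δ : ℝ => Pd P δ s) 0 :=
      continuousAt_const.sub (h2.smul (continuousAt_const.sub h1))
    have h4 := h3.tendsto.mono_left (nhdsWithin_le_nhds (s := Set.Ioi 0))
    have e0 : Pd P 0 s = ev s P := by
      simp [Pd, div_self hs0]
    rwa [e0] at h4
  have hcont : Continuous fun Q : Matrix (Fin n) (Fin n) ℂ => ‖Lb ((τ : ℂ) • Q) (ev s C) *ᵥ z‖ := by
    refine continuous_norm.comp (Continuous.matrix_mulVec ?_ continuous_const)
    exact Lb_continuous.comp (by fun_prop :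
      Continuous fun Q : Matrix (Fin n) (Fin n) ℂ => ((τ : ℂ) • Q, ev s C))
  refine ge_of_tendsto ((hcont.tendsto _).comp hlim) ?_
  filter_upwards [hev] with δ h
  exact hδ δ h.1 h.2.1 h.2.2 s hs.le τ hτ z

end mainLB

section finalpart
open scoped Matrix.Norms.Operator

lemma entry_le_norm {m : Type*} [Fintype m] [DecidableEq m] (A : Matrix m m ℂ) (i j : m) :
    ‖A i j‖ ≤ ‖A‖ := by
  have h1 := Matrix.linfty_opNorm_mulVec A (Pi.single j (1 : ℂ))
  have h2 := norm_le_pi_norm (A *ᵥ Pi.single j (1 : ℂ)) i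
  have h3 : ‖(Pi.single j (1 : ℂ) : m → ℂ)‖ ≤ 1 := by
    refine (pi_norm_le_iff_of_nonneg zero_le_one).2 fun k => ?_
    by_cases hk : k = j
    · subst hk; simp
    · simp [hk]
  have h4 : (A *ᵥ Pi.single j (1 : ℂ)) i = A i j := by simp
  rw [h4] at h2
  have h5 : ‖A‖ * ‖(Pi.single j (1 : ℂ) : m → ℂ)‖ ≤ ‖A‖ * 1 :=
    mul_le_mul_of_nonneg_left h3 (norm_nonneg A)
  linarith

lemma ev_fromBlocks {n : ℕ} (s : ℂ) (A B C D : Matrix (Fin n) (Fin n) (RatFunc ℝ)) :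
    ev s (Matrix.fromBlocks A B C D) = Matrix.fromBlocks (ev s A) (ev s B) (ev s C) (ev s D) := by
  simp [ev, Matrix.fromBlocks_map]

lemma ev_zero_mat {n : ℕ} (s : ℂ) : ev s (0 : Matrix (Fin n) (Fin n) (RatFunc ℝ)) = 0 := by
  ext i j
  simp [ev, evalC]

lemma RegM.zero_mat {n : ℕ} {s : ℂ} : RegM s (0 : Matrix (Fin n) (Fin n) (RatFunc ℝ)) :=
  fun _ _ => Subring.zero_mem _

lemma RegM.fromBlocks {n : ℕ} {s : ℂ} {A B C D : Matrix (Fin n) (Fin n) (RatFunc ℝ)}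
    (hA : RegM s A) (hB : RegM s B) (hC : RegM s C) (hD : RegM s D) :
    RegM s (Matrix.fromBlocks A B C D) := by
  rintro (i | i) (j | j)
  · exact hA i j
  · exact hB i j
  · exact hC i j
  · exact hD i j

lemma stable_of_LB {n : ℕ} {Q C : Matrix (Fin n) (Fin n) (RatFunc ℝ)} {κ : ℝ} (hκ : 0 < κ)
    (hQ : ∀ s : ℂ, 0 < s.re → RegM s Q) (hC : ∀ s : ℂ, 0 < s.re → RegM s C)
    (h : ∀ s : ℂ, 0 < s.re → LB κ (Lb (ev s Q) (ev s C))) : FeedbackStable Q C := by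
  have hdet : ((1 : Matrix (Fin n) (Fin n) (RatFunc ℝ)) - Q * C).det ≠ 0 := by
    intro h0
    have h1 : (0 : ℝ) < (1 : ℂ).re := by simp
    have h2 := (Matrix.isUnit_iff_isUnit_det _).1 ((h 1 h1).isUnit hκ)
    rw [Lb_det] at h2
    have h3 := ev_det (RegM.one.sub ((hQ 1 h1).mul (hC 1 h1)))
    rw [h0, ev_sub RegM.one ((hQ 1 h1).mul (hC 1 h1)), ev_one, ev_mul (hQ 1 h1) (hC 1 h1)] at h3
    rw [← h3] at h2
    simp [evalC] at h2
  refine ⟨hdet, ?_⟩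
  set X := ((1 : Matrix (Fin n) (Fin n) (RatFunc ℝ)) - Q * C)⁻¹ with hX
  have hX1 : X * (1 - Q * C) = 1 := Matrix.nonsing_inv_mul _ (isUnit_iff_ne_zero.2 hdet)
  set H := Matrix.fromBlocks X (X * Q) (C * X) (C * X * Q) with hH
  set K := Matrix.fromBlocks X (X * Q) (C * X) (C * X * Q + 1) with hK
  set D := Matrix.fromBlocks (0 : Matrix (Fin n) (Fin n) (RatFunc ℝ)) (0 : Matrix (Fin n) (Fin n) (RatFunc ℝ)) (0 : Matrix (Fin n) (Fin n) (RatFunc ℝ)) (1 : Matrix (Fin n) (Fin n) (RatFunc ℝ)) with hD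
  have hKD : H = K - D := by
    rw [sub_eq_add_neg, hD, Matrix.fromBlocks_neg, hK, Matrix.fromBlocks_add, hH]
    simp
  have hKL : K * Matrix.fromBlocks 1 (-Q) (-C) 1 = 1 := by
    have e1 : X - X * Q * C = 1 := by rw [← hX1, Matrix.mul_sub, Matrix.mul_one, Matrix.mul_assoc]
    have e2 : C * X - C * X * Q * C = C := by
      have : C * (X - X * Q * C) = C := by rw [e1, Matrix.mul_one]
      refine Eq.trans ?_ this
      rw [Matrix.mul_sub, Matrix.mul_assoc C X Q, Matrix.mul_assoc C (X * Q) C]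
    rw [hK, Matrix.fromBlocks_multiply, ← Matrix.fromBlocks_one]
    congr 1
    · refine Eq.trans ?_ e1
      rw [Matrix.mul_one, Matrix.mul_neg, sub_eq_add_neg]
    · simp
    · have : C * X * 1 + (C * X * Q + 1) * -C = (C * X - C * X * Q * C) - C := by noncomm_ring
      rw [this, e2, sub_self]
    · simp
  set B : ℝ := κ⁻¹ + ‖Matrix.fromBlocks (0 : Matrix (Fin n) (Fin n) ℂ) (0 : Matrix (Fin n) (Fin n) ℂ) (0 : Matrix (Fin n) (Fin n) ℂ) (1 : Matrix (Fin n) (Fin n) ℂ)‖ with hB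
  have hbound : ∀ s : ℂ, 0 < s.re → RegM s K → RegM s H ∧ ∀ i j, ‖evalC (H i j) s‖ ≤ B := by
    intro s hs hKs
    have rD : RegM s D := RegM.fromBlocks RegM.zero_mat RegM.zero_mat RegM.zero_mat RegM.one
    have rL : RegM s (Matrix.fromBlocks 1 (-Q) (-C) 1) :=
      RegM.fromBlocks RegM.one (hQ s hs).neg (hC s hs).neg RegM.one
    have eL : ev s (Matrix.fromBlocks 1 (-Q) (-C) 1) = Lb (ev s Q) (ev s C) := by
      rw [ev_fromBlocks, ev_one, ev_neg (hQ s hs), ev_neg (hC s hs), Lb]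
    have h1 := ev_mul hKs rL
    rw [hKL, ev_one, eL] at h1
    have h2 : (Lb (ev s Q) (ev s C))⁻¹ = ev s K := Matrix.inv_eq_left_inv h1.symm
    have h3 := (h s hs).norm_inv_le hκ
    rw [h2] at h3
    refine ⟨by rw [hKD]; exact hKs.sub rD, fun i j => ?_⟩
    have h4 : ev s H = ev s K - Matrix.fromBlocks 0 0 0 1 := by
      have h6 : ev s D = Matrix.fromBlocks 0 0 0 1 := by
        rw [hD, ev_fromBlocks, ev_one, ev_zero_mat]
      rw [hKD, ev_sub hKs rD, h6]
    have h5 : ‖ev s H‖ ≤ B := by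
      rw [h4]
      exact (norm_sub_le _ _).trans (by rw [hB]; linarith)
    exact (entry_le_norm (ev s H) i j).trans h5
  have hcof := eventually_cofinite_regM K
  constructor
  · intro i j
    apply proper_of_bounded (K := B)
    have h1 : Tendsto (fun x : ℝ => (x : ℂ)) atTop cofinite :=
      (Complex.ofReal_injective.tendsto_cofinite).mono_left
        (atTop_le_cocompact.trans (by
          have := @Filter.cocompact_le_cofinite ℝ _
          exact this))
    filter_upwards [h1.eventually hcof, eventually_gt_atTop 0] with x hx hx0
    exact (hbound x (by simpa using hx0) hx).2 i j
  · intro s hs i j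
    have ht : Tendsto (fun δ : ℝ => s + (δ : ℂ)) (𝓝[>] 0) (𝓝[≠] s) := by
      refine tendsto_nhdsWithin_iff.2 ⟨?_, ?_⟩
      · have : Continuous fun δ : ℝ => s + (δ : ℂ) := by fun_prop
        have := this.tendsto 0
        simp only [Complex.ofReal_zero, add_zero] at this
        exact this.mono_left nhdsWithin_le_nhds
      · filter_upwards [self_mem_nhdsWithin] with δ hδ
        have : (δ : ℂ) ≠ 0 := by exact_mod_cast (ne_of_gt hδ)
        simpa using this
    refine not_pole_of_bounded (l := map (fun δ : ℝ => s + (δ : ℂ)) (𝓝[>] 0)) (K := B)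
      (ht.mono_right nhdsWithin_le_nhds) ?_
    rw [eventually_map]
    filter_upwards [(ht.mono_right (punctured_le_cofinite s)).eventually hcof, self_mem_nhdsWithin] with δ hδ hδ0
    have h1 := hbound (s + (δ : ℂ)) (by simp; exact add_pos_of_nonneg_of_pos hs hδ0) hδ
    exact ⟨h1.1 i j, h1.2 i j⟩

lemma det_of_stable {n : ℕ} {P C : Matrix (Fin n) (Fin n) (RatFunc ℝ)} (hP : Proper P)
    (hP0 : RegM 0 P) (hC : Proper C) (hC0 : RegM 0 C) {τ : ℝ} (h : FeedbackStable (τ • P) C) :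
    (Lb ((τ : ℂ) • ev 0 P) (ev 0 C)).det ≠ 0 ∧
    (Lb ((τ : ℂ) • cx (evalInf P)) (cx (evalInf C))).det ≠ 0 := by
  obtain ⟨hdet, hprop, hpole⟩ := h
  set X := ((1 : Matrix (Fin n) (Fin n) (RatFunc ℝ)) - τ • P * C)⁻¹ with hX
  have hX1 : X * (1 - τ • P * C) = 1 := Matrix.nonsing_inv_mul _ (isUnit_iff_ne_zero.2 hdet)
  have hXp : Proper X := fun i j => hprop (Sum.inl i) (Sum.inl j)
  have hX0 : RegM 0 X := fun i j => hpole 0 (by simp) (Sum.inl i) (Sum.inl j)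
  have key : ∀ s, RegM s X → RegM s P → RegM s C →
      ev s X * (1 - (τ : ℂ) • ev s P * ev s C) = 1 := by
    intro s h1 h2 h3
    have h4 := ev_mul h1 (RegM.one.sub ((h2.smul τ).mul h3))
    rw [hX1, ev_one, ev_sub RegM.one ((h2.smul τ).mul h3), ev_one, ev_mul (h2.smul τ) h3, ev_smul τ h2] at h4
    exact h4.symm
  have fin : ∀ A M : Matrix (Fin n) (Fin n) ℂ, A * M = 1 → M.det ≠ 0 := by
    intro A M hAM h0
    have := congrArg Matrix.det hAM
    rw [Matrix.det_mul, h0, mul_zero, Matrix.det_one] at this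
    exact zero_ne_one this
  constructor
  · rw [Lb_det]
    exact fin _ _ (key 0 hX0 hP0 hC0)
  · rw [Lb_det]
    refine fin (cx (evalInf X)) _ ?_
    have t1 : Tendsto (fun s => ev s X * (1 - (τ : ℂ) • ev s P * ev s C)) (Bornology.cobounded ℂ)
        (𝓝 (cx (evalInf X) * (1 - (τ : ℂ) • cx (evalInf P) * cx (evalInf C)))) :=
      (ev_inf hXp).mul (tendsto_const_nhds.sub (((ev_inf hP).const_smul (τ : ℂ)).mul (ev_inf hC)))
    refine tendsto_nhds_unique (t1.congr' ?_) tendsto_const_nhds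
    filter_upwards [eventually_regM_cobounded X, eventually_regM_cobounded P,
      eventually_regM_cobounded C] with s h1 h2 h3
    exact key s h1 h2 h3

lemma det_conv {n : ℕ} (A B : Matrix (Fin n) (Fin n) ℝ) (τ : ℝ) :
    (Lb ((τ : ℂ) • cx A) (cx B)).det ≠ 0 ↔ (τ • (A * B) - 1).det ≠ 0 := by
  have h1 : (1 - (τ : ℂ) • cx A * cx B) = Complex.ofRealHom.mapMatrix (-(τ • (A * B) - 1)) := by
    rw [neg_sub, map_sub, map_one, Matrix.smul_mul]
    congr 1
    ext i j
    simp [cx, Matrix.mul_apply]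
  rw [Lb_det, h1, ← RingHom.map_det, Matrix.det_neg]
  simp

lemma Lb_det_swap {n : ℕ} (A B : Matrix (Fin n) (Fin n) ℂ) (t : ℂ) :
    (Lb (t • A) B).det = (Lb (t • B) A).det := by
  rw [Lb_det, Lb_det, Matrix.det_one_sub_mul_comm, Matrix.mul_smul, Matrix.smul_mul]

end finalpart

/-- equivalent determinant characterisations of robust stability
of `[τP, C]` for all `τ ∈ [0,1]`. -/
theorem deformation_stability_tfae {n : ℕ} (P C : Matrix (Fin n) (Fin n) (RatFunc ℝ))
    (hP : IsNI P) (hP0 : ¬ HasPole P 0) (hC : IsSNI C) :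
    ((∀ τ ∈ Set.Icc (0 : ℝ) 1, FeedbackStable (τ • P) C) ↔
     (∀ τ ∈ Set.Icc (0 : ℝ) 1,
        (τ • (evalInf P * evalInf C) - 1).det ≠ 0 ∧
        (τ • (evalR P 0 * evalInf C) - 1).det ≠ 0 ∧
        (τ • (evalR P 0 * evalR C 0) - 1).det ≠ 0)) ∧
    ((∀ τ ∈ Set.Icc (0 : ℝ) 1, FeedbackStable (τ • P) C) ↔
     (∀ τ ∈ Set.Icc (0 : ℝ) 1,
        (τ • (evalInf P * evalInf C) - 1).det ≠ 0 ∧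
        (τ • (evalInf P * evalR C 0) - 1).det ≠ 0 ∧
        (τ • (evalR P 0 * evalR C 0) - 1).det ≠ 0)) := by
  have rC : ∀ s : ℂ, 0 ≤ s.re → RegM s C := fun s hs i j => hC.1.2 s hs i j
  have rP : ∀ s : ℂ, 0 < s.re → RegM s P := fun s hs => regM_iff.2 (hP.2.1 s hs)
  have hC0 : RegM 0 C := rC 0 (by simp)
  have hC0' : ¬ HasPole C 0 := regM_iff.1 hC0
  have hCn := hC.isNI
  have fwd : (∀ τ ∈ Set.Icc (0 : ℝ) 1, FeedbackStable (τ • P) C) →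
      (∀ τ ∈ Set.Icc (0 : ℝ) 1,
        (τ • (evalInf P * evalInf C) - 1).det ≠ 0 ∧
        (τ • (evalR P 0 * evalInf C) - 1).det ≠ 0 ∧
        (τ • (evalInf P * evalR C 0) - 1).det ≠ 0 ∧
        (τ • (evalR P 0 * evalR C 0) - 1).det ≠ 0) := by
    intro h
    have hd := fun τ hτ => det_of_stable hP.1 (regM_iff.2 hP0) hC.1.1 hC0 (h τ hτ)
    have m1 := mid_det (hP.im_zero hP0) hP.im_inf (pr_inf hP hP0) (hCn.im_zero hC0') hCn.im_inf
      (pr_inf hCn hC0') (fun τ hτ => (hd τ hτ).1) (fun τ hτ => (hd τ hτ).2)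
    have m2 := mid_det (hCn.im_zero hC0') hCn.im_inf (pr_inf hCn hC0') (hP.im_zero hP0) hP.im_inf
      (pr_inf hP hP0) (fun τ hτ => by rw [Lb_det_swap]; exact (hd τ hτ).1)
      (fun τ hτ => by rw [Lb_det_swap]; exact (hd τ hτ).2)
    intro τ hτ
    have a1 := hd τ hτ
    have a2 := m1 τ hτ
    have a3 := m2 τ hτ
    rw [Lb_det_swap] at a3
    rw [ev_zero, ev_zero] at a1
    rw [ev_zero] at a2 a3
    exact ⟨(det_conv _ _ _).1 a1.2, (det_conv _ _ _).1 a2, (det_conv _ _ _).1 a3, (det_conv _ _ _).1 a1.1⟩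
  have bwd : (∀ τ ∈ Set.Icc (0 : ℝ) 1,
        (τ • (evalInf P * evalInf C) - 1).det ≠ 0 ∧
        (τ • (evalR P 0 * evalR C 0) - 1).det ≠ 0) →
      (∀ τ ∈ Set.Icc (0 : ℝ) 1, FeedbackStable (τ • P) C) := by
    intro h
    obtain ⟨κ, hκ, hLB⟩ := main_LB hP hP0 hC
      (fun τ hτ => by rw [ev_zero, ev_zero]; exact (det_conv _ _ _).2 (h τ hτ).2)
      (fun τ hτ => (det_conv _ _ _).2 (h τ hτ).1)
    intro τ hτ
    refine stable_of_LB hκ (fun s hs => (rP s hs).smul τ) (fun s hs => rC s hs.le) fun s hs => ?_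
    rw [ev_smul τ (rP s hs)]
    exact hLB τ hτ s hs
  exact ⟨⟨fun h τ hτ => ⟨(fwd h τ hτ).1, (fwd h τ hτ).2.1, (fwd h τ hτ).2.2.2⟩,
      fun h => bwd fun τ hτ => ⟨(h τ hτ).1, (h τ hτ).2.2⟩⟩,
    ⟨fun h τ hτ => ⟨(fwd h τ hτ).1, (fwd h τ hτ).2.2.1, (fwd h τ hτ).2.2.2⟩,
      fun h => bwd fun τ hτ => ⟨(h τ hτ).1, (h τ hτ).2.2⟩⟩⟩

end NIControl
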